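/- Dispersive estimate on homogeneous trees: let Q ≥ 2 be an integer, let T be a homogeneous tree of degree Q+1, let 0 < α ≤ 2, and let 2 < q ≤ ∞ and 2 < q̃ ≤ ∞. Then there exists a constant C > 0 such that for every t ∈ ℝ and every f ∈ ℓ^{q′}(T) (which lies in ℓ²(T) since q′ ≤ 2): ‖e^{it(−Δ)^{α/2}} f‖_{ℓ^{q̃}(T)} ≤ C·(1 + |t|)^{−3/2}·‖f‖_{ℓ^{q′}(T)}. -/

import Mathlib

open MeasureTheory
open scoped ENNReal

/-!
Functions of `-Δ` are radial convolution operators on the tree, and spherical inversion writes their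
kernel at distance `d` as `Q ^ (-d / 2)` times an integral over `θ ∈ [0, π]` whose amplitude is
`sin θ` times a trigonometric polynomial of degree `d + 1`. For `e^{itφ(-Δ)}` the phase
`φ (1 - γ₀ cos θ)` is critical only at the endpoints, where the amplitude vanishes; integrating by
parts twice, the second time away from `|t| ^ (-1 / 2)`-neighbourhoods of the endpoints, bounds the
kernel by a multiple of `(1 + |t|) ^ (-3 / 2) * (d + 1) ^ 2 * Q ^ (-d / 2)`.

The kernel `Q ^ (-d / 2)` just fails to be bounded on `ℓ²`, but `r ^ (-d)` is bounded for every
`r > √Q`, by Schur's test with the weights `Q ^ (-d / 2)`. Interpolating with `ℓ¹ → ℓ^∞`, one finds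
that `r ^ (-2d / p)` maps `ℓ^{p'}` to `ℓ^p` (the Kunze–Stein phenomenon), and for `p > 2` some
`r > √Q` makes this kernel dominate `(d + 1) ^ 2 * Q ^ (-d / 2)`. Since `ℓ^p` norms decrease in `p`,
a single `p ∈ (2, min q q̃]` suffices.
-/

section Kernels

variable {ι κ : Type*}

theorem tsum_rpow_mul_rpow_le (f g : ι → ℝ≥0∞) {a b : ℝ} (ha : 0 ≤ a) (hb : 0 ≤ b)
    (hab : a + b = 1) :
    ∑' i, f i ^ a * g i ^ b ≤ (∑' i, f i) ^ a * (∑' i, g i) ^ b := by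
  let _ : MeasurableSpace ι := ⊤
  simpa only [lintegral_count] using ENNReal.lintegral_mul_norm_pow_le (μ := Measure.count)
    (f := f) (g := g) measurable_from_top.aemeasurable measurable_from_top.aemeasurable ha hb hab

/-- The operator with nonnegative kernel `k` maps `ℓ²(κ)` to `ℓ²(ι)`, with squared norm at most
`C`. -/
def IsSqBoundedKernel (k : ι → κ → ℝ≥0∞) (C : ℝ≥0∞) : Prop :=
  ∀ h : κ → ℝ≥0∞, ∑' x, (∑' y, k x y * h y) ^ 2 ≤ C * ∑' y, h y ^ 2

theorem tsum_mul_sq_le_tsum_mul_weight {w : κ → ℝ≥0∞} (hw₀ : ∀ y, w y ≠ 0) (hw : ∀ y, w y ≠ ⊤)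
    (k h : κ → ℝ≥0∞) :
    (∑' y, k y * h y) ^ 2 ≤ (∑' y, k y * w y) * ∑' y, k y * (h y ^ 2 / w y) := by
  have hsplit (y : κ) :
      k y * h y = (k y * w y) ^ (1 / 2 : ℝ) * (k y * (h y ^ 2 / w y)) ^ (1 / 2 : ℝ) := by
    rw [← ENNReal.mul_rpow_of_nonneg _ _ (by norm_num), mul_mul_mul_comm,
      ENNReal.mul_div_cancel (hw₀ y) (hw y), ← sq, ← mul_pow, ← ENNReal.rpow_two,
      ← ENNReal.rpow_mul, mul_one_div_cancel two_ne_zero, ENNReal.rpow_one]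
  calc (∑' y, k y * h y) ^ 2
      ≤ ((∑' y, k y * w y) ^ (1 / 2 : ℝ) *
          (∑' y, k y * (h y ^ 2 / w y)) ^ (1 / 2 : ℝ)) ^ 2 := by
        simp only [hsplit]
        gcongr
        exact tsum_rpow_mul_rpow_le _ _ (by norm_num) (by norm_num) (by norm_num)
    _ = (∑' y, k y * w y) * ∑' y, k y * (h y ^ 2 / w y) := by
        rw [mul_pow, ← ENNReal.rpow_mul_natCast, ← ENNReal.rpow_mul_natCast]
        norm_num

theorem IsSqBoundedKernel.of_schur {k : ι → κ → ℝ≥0∞} {u : ι → ℝ≥0∞} {w : κ → ℝ≥0∞}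
    {μ ν : ℝ≥0∞} (hw₀ : ∀ y, w y ≠ 0) (hw : ∀ y, w y ≠ ⊤)
    (hrow : ∀ x, ∑' y, k x y * w y ≤ μ * u x) (hcol : ∀ y, ∑' x, k x y * u x ≤ ν * w y) :
    IsSqBoundedKernel k (μ * ν) := fun h => calc
  ∑' x, (∑' y, k x y * h y) ^ 2
      ≤ ∑' x, μ * u x * ∑' y, k x y * (h y ^ 2 / w y) := by
        gcongr with x
        exact (tsum_mul_sq_le_tsum_mul_weight hw₀ hw _ _).trans (mul_le_mul_left (hrow x) _)
    _ = μ * ∑' y, (∑' x, k x y * u x) * (h y ^ 2 / w y) := by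
        simp only [mul_assoc, ENNReal.tsum_mul_left, ← ENNReal.tsum_mul_right]
        simp only [← ENNReal.tsum_mul_left]
        rw [ENNReal.tsum_comm]
        simp only [mul_left_comm]
    _ ≤ μ * ∑' y, ν * w y * (h y ^ 2 / w y) := by
        gcongr with y
        exact hcol y
    _ = μ * ν * ∑' y, h y ^ 2 := by
        simp only [mul_assoc, ENNReal.tsum_mul_left, ENNReal.mul_div_cancel (hw₀ _) (hw _)]

theorem tsum_rpow_mul_rpow_le_rpow_mul_sq {p : ℝ} (hp : 2 ≤ p) (k f : κ → ℝ≥0∞) :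
    (∑' y, k y ^ (2 / p) * f y) ^ p ≤
      (∑' y, f y ^ (p / (p - 1))) ^ (p - 2) * (∑' y, k y * f y ^ (p / (p - 1) / 2)) ^ 2 := by
  have hp0 : 0 < p := by linarith
  have hp1 : 0 < p - 1 := by linarith
  have hs : 0 ≤ 1 - 2 / p := by rwa [sub_nonneg, div_le_one hp0]
  have hsplit (y : κ) : k y ^ (2 / p) * f y =
      (f y ^ (p / (p - 1))) ^ (1 - 2 / p) * (k y * f y ^ (p / (p - 1) / 2)) ^ (2 / p) := by
    rw [ENNReal.mul_rpow_of_nonneg _ _ (by positivity), mul_left_comm, ← ENNReal.rpow_mul,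
      ← ENNReal.rpow_mul, ← ENNReal.rpow_add_of_nonneg _ _ (by positivity) (by positivity)]
    have hexp : p / (p - 1) * (1 - 2 / p) + p / (p - 1) / 2 * (2 / p) = 1 := by
      field_simp
      ring
    rw [hexp, ENNReal.rpow_one]
  calc (∑' y, k y ^ (2 / p) * f y) ^ p
      ≤ ((∑' y, f y ^ (p / (p - 1))) ^ (1 - 2 / p) *
          (∑' y, k y * f y ^ (p / (p - 1) / 2)) ^ (2 / p)) ^ p := by
        simp only [hsplit]
        gcongr
        exact tsum_rpow_mul_rpow_le _ _ hs (by positivity) (by ring)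
    _ = _ := by
        rw [ENNReal.mul_rpow_of_nonneg _ _ hp0.le, ← ENNReal.rpow_mul, ← ENNReal.rpow_mul,
          div_mul_cancel₀ _ hp0.ne', ENNReal.rpow_two, sub_mul, div_mul_cancel₀ _ hp0.ne', one_mul]

-- The bounds `ℓ¹ → ℓ^∞` of `1` and `ℓ² → ℓ²` of `k` are interpolated by Hölder's inequality.
theorem IsSqBoundedKernel.tsum_tsum_rpow_mul_rpow_le {k : ι → κ → ℝ≥0∞} {C : ℝ≥0∞}
    (hk : IsSqBoundedKernel k C) {p : ℝ} (hp : 2 ≤ p) (f : κ → ℝ≥0∞) :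
    ∑' x, (∑' y, k x y ^ (2 / p) * f y) ^ p ≤ C * (∑' y, f y ^ (p / (p - 1))) ^ (p - 1) := by
  set A := ∑' y, f y ^ (p / (p - 1))
  calc ∑' x, (∑' y, k x y ^ (2 / p) * f y) ^ p
      ≤ ∑' x, A ^ (p - 2) * (∑' y, k x y * f y ^ (p / (p - 1) / 2)) ^ 2 :=
        ENNReal.tsum_le_tsum fun x => tsum_rpow_mul_rpow_le_rpow_mul_sq hp _ _
    _ ≤ A ^ (p - 2) * (C * ∑' y, (f y ^ (p / (p - 1) / 2)) ^ 2) := by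
        rw [ENNReal.tsum_mul_left]
        gcongr
        exact hk _
    _ = C * (A ^ (p - 2) * A ^ (1 : ℝ)) := by
        simp only [← ENNReal.rpow_two, ← ENNReal.rpow_mul, div_mul_cancel₀ _ (two_ne_zero (α := ℝ)),
          ENNReal.rpow_one]
        ring
    _ = C * A ^ (p - 1) := by
        rw [← ENNReal.rpow_add_of_nonneg _ _ (by linarith) zero_le_one]
        ring_nf

variable {E F : Type*} [NormedAddCommGroup E] [NormedAddCommGroup F] [MeasurableSpace ι]
  [MeasurableSingletonClass ι] [MeasurableSpace κ] [MeasurableSingletonClass κ]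

theorem eLpNorm_count_eq_tsum (f : ι → E) {p : ℝ≥0∞} (hp₀ : p ≠ 0) (hp : p ≠ ⊤) :
    eLpNorm f p Measure.count = (∑' x, ‖f x‖ₑ ^ p.toReal) ^ (1 / p.toReal) := by
  rw [eLpNorm_eq_lintegral_rpow_enorm_toReal hp₀ hp, lintegral_count]

theorem eLpNorm_count_antitone (f : ι → E) {p q : ℝ≥0∞} (hp₀ : p ≠ 0) (hpq : p ≤ q) :
    eLpNorm f q Measure.count ≤ eLpNorm f p Measure.count := by
  have hle (x : ι) := enorm_le_eLpNorm_count f x hp₀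
  rcases eq_or_ne q ⊤ with rfl | hq
  · rw [eLpNorm_exponent_top, eLpNormEssSup_count]
    exact iSup_le hle
  have hq₀ : q ≠ 0 := ((pos_iff_ne_zero.2 hp₀).trans_le hpq).ne'
  have hp : p ≠ ⊤ := ne_top_of_le_ne_top hq hpq
  have hp' := ENNReal.toReal_pos hp₀ hp
  have hsub : 0 ≤ q.toReal - p.toReal := sub_nonneg.2 (ENNReal.toReal_mono hq hpq)
  set N := eLpNorm f p Measure.count with hN
  have hNp : ∑' x, ‖f x‖ₑ ^ p.toReal = N ^ p.toReal := by
    rw [hN, eLpNorm_count_eq_tsum f hp₀ hp, ← ENNReal.rpow_mul, one_div_mul_cancel hp'.ne',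
      ENNReal.rpow_one]
  have hsplit (a : ℝ≥0∞) : a ^ q.toReal = a ^ (q.toReal - p.toReal) * a ^ p.toReal := by
    rw [← ENNReal.rpow_add_of_nonneg _ _ hsub hp'.le, sub_add_cancel]
  rw [eLpNorm_count_eq_tsum f hq₀ hq, one_div, ENNReal.rpow_inv_le_iff (ENNReal.toReal_pos hq₀ hq)]
  calc ∑' x, ‖f x‖ₑ ^ q.toReal
      ≤ ∑' x, N ^ (q.toReal - p.toReal) * ‖f x‖ₑ ^ p.toReal := by
        gcongr with x
        rw [hsplit]
        gcongr
        exact hle x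
    _ = N ^ q.toReal := by rw [ENNReal.tsum_mul_left, hNp, ← hsplit]

theorem IsSqBoundedKernel.eLpNorm_count_le {k : ι → κ → ℝ≥0∞} {C c : ℝ≥0∞}
    (hk : IsSqBoundedKernel k C) {p : ℝ} (hp : 2 ≤ p) {f : κ → E} {g : ι → F}
    (hg : ∀ x, ‖g x‖ₑ ≤ c * ∑' y, k x y ^ (2 / p) * ‖f y‖ₑ) :
    eLpNorm g (ENNReal.ofReal p) Measure.count ≤
      c * C ^ (1 / p) * eLpNorm f (ENNReal.ofReal (p / (p - 1))) Measure.count := by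
  have hp0 : 0 < p := by linarith
  have hp' : 0 < p / (p - 1) := div_pos hp0 (by linarith)
  rw [eLpNorm_count_eq_tsum _ (by simpa using hp0) ENNReal.ofReal_ne_top,
    eLpNorm_count_eq_tsum _ (by simpa using hp') ENNReal.ofReal_ne_top,
    ENNReal.toReal_ofReal hp0.le, ENNReal.toReal_ofReal hp'.le, one_div_div, one_div,
    ENNReal.rpow_inv_le_iff hp0]
  calc ∑' x, ‖g x‖ₑ ^ p ≤ ∑' x, c ^ p * (∑' y, k x y ^ (2 / p) * ‖f y‖ₑ) ^ p := by
        gcongr with x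
        rw [← ENNReal.mul_rpow_of_nonneg _ _ hp0.le]
        gcongr
        exact hg x
    _ ≤ c ^ p * (C * (∑' y, ‖f y‖ₑ ^ (p / (p - 1))) ^ (p - 1)) := by
        rw [ENNReal.tsum_mul_left]
        gcongr
        exact hk.tsum_tsum_rpow_mul_rpow_le hp _
    _ = _ := by
        rw [ENNReal.mul_rpow_of_nonneg _ _ hp0.le, ENNReal.mul_rpow_of_nonneg _ _ hp0.le,
          ← ENNReal.rpow_mul, ← ENNReal.rpow_mul, inv_mul_cancel₀ hp0.ne', ENNReal.rpow_one,
          div_mul_cancel₀ _ hp0.ne', mul_assoc]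

end Kernels

theorem exists_real_exponent_between {q qt q' : ℝ≥0∞} (hq : 2 < q) (hqt : 2 < qt)
    (hqq' : 1 / q + 1 / q' = 1) :
    ∃ p : ℝ, 2 < p ∧ ENNReal.ofReal p ≤ qt ∧ q' ≤ ENNReal.ofReal (p / (p - 1)) := by
  obtain ⟨p, hp, hpq⟩ := ENNReal.lt_iff_exists_nnreal_btwn.1 (lt_min hq hqt)
  have hp2 : 2 < (p : ℝ) := by exact_mod_cast hp
  have hp0 : 0 < (p : ℝ) := by linarith
  have hp' : 0 < (p : ℝ) / (p - 1) := div_pos hp0 (by linarith)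
  have hconj : (p : ℝ≥0∞)⁻¹ + (ENNReal.ofReal (p / (p - 1)))⁻¹ = 1 := by
    rw [← ENNReal.ofReal_coe_nnreal, ← ENNReal.ofReal_inv_of_pos hp0,
      ← ENNReal.ofReal_inv_of_pos hp', ← ENNReal.ofReal_add (by positivity) (inv_nonneg.2 hp'.le),
      ENNReal.ofReal_eq_one, inv_div]
    field_simp
    ring
  refine ⟨p, hp2, ?_, ?_⟩
  · rw [ENNReal.ofReal_coe_nnreal]
    exact hpq.le.trans (min_le_right _ _)
  · rw [one_div, one_div] at hqq'
    rw [← ENNReal.inv_le_inv,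
      ENNReal.eq_sub_of_add_eq' ENNReal.one_ne_top ((add_comm _ _).trans hconj),
      ENNReal.eq_sub_of_add_eq' ENNReal.one_ne_top ((add_comm _ _).trans hqq')]
    exact tsub_le_tsub_left (ENNReal.inv_le_inv.2 (hpq.le.trans (min_le_left _ _))) _

section SqSummable

variable {ι κ 𝕜 E F : Type*} [NontriviallyNormedField 𝕜] [NormedAddCommGroup E] [NormedSpace 𝕜 E]
  [NormedAddCommGroup F] [NormedSpace 𝕜 F]

theorem lp_two_tsum_enorm_sq (f : lp (fun _ : ι => E) 2) : ∑' x, ‖f x‖ₑ ^ 2 = ‖f‖ₑ ^ 2 := by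
  have h : HasSum (fun x => ‖f x‖ ^ 2) (‖f‖ ^ 2) := by
    simpa using lp.hasSum_norm (by norm_num) f
  simp only [← ofReal_norm, ← ENNReal.ofReal_pow (norm_nonneg _)]
  rw [← ENNReal.ofReal_tsum_of_nonneg (fun x => sq_nonneg _) h.summable, h.tsum_eq]

theorem IsSqBoundedKernel.opNorm_le {k : ι → κ → ℝ≥0∞} {M : ℝ} (hM : 0 ≤ M)
    (hk : IsSqBoundedKernel k (ENNReal.ofReal M ^ 2))
    {T : lp (fun _ : κ => E) 2 →L[𝕜] lp (fun _ : ι => F) 2}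
    (hT : ∀ f x, ‖T f x‖ₑ ≤ ∑' y, k x y * ‖f y‖ₑ) : ‖T‖ ≤ M := by
  refine T.opNorm_le_bound hM fun f => ?_
  have hsq : ‖T f‖ₑ ^ 2 ≤ (ENNReal.ofReal M * ‖f‖ₑ) ^ 2 := calc
    ‖T f‖ₑ ^ 2 = ∑' x, ‖T f x‖ₑ ^ 2 := (lp_two_tsum_enorm_sq _).symm
    _ ≤ ∑' x, (∑' y, k x y * ‖f y‖ₑ) ^ 2 := by
        gcongr with x
        exact hT f x
    _ ≤ ENNReal.ofReal M ^ 2 * ∑' y, ‖f y‖ₑ ^ 2 := hk _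
    _ = (ENNReal.ofReal M * ‖f‖ₑ) ^ 2 := by rw [lp_two_tsum_enorm_sq, mul_pow]
  have h := (ENNReal.pow_le_pow_left_iff two_ne_zero).1 hsq
  rwa [← ofReal_norm, ← ofReal_norm, ← ENNReal.ofReal_mul hM,
    ENNReal.ofReal_le_ofReal_iff (by positivity)] at h

end SqSummable

section Tree

variable {V : Type*} {G : SimpleGraph V}

theorem isTree_existsUnique_adj_dist_add_one (hG : G.IsTree) {x y : V} (hxy : x ≠ y) :
    ∃! z, G.Adj x z ∧ G.dist z y + 1 = G.dist x y := by
  obtain ⟨p, hp⟩ := hG.connected.exists_walk_length_eq_dist x y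
  have hunique (z : V) (hz : G.Adj x z) (hd : G.dist z y + 1 = G.dist x y) : z = p.snd := by
    obtain ⟨p', hp'⟩ := hG.connected.exists_walk_length_eq_dist z y
    have hgeodesic : (p'.cons hz).length = G.dist x y := by
      rw [SimpleGraph.Walk.length_cons, hp', hd]
    have hpath : p'.cons hz = p := congrArg Subtype.val
      ((hG.isAcyclic.subsingleton_path _ _).elim
        ⟨p'.cons hz, SimpleGraph.Walk.isPath_of_length_eq_dist _ hgeodesic⟩
        ⟨p, p.isPath_of_length_eq_dist hp⟩)
    rw [← hpath, SimpleGraph.Walk.snd_cons]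
  cases p with
  | nil => exact absurd rfl hxy
  | @cons _ z _ hz p =>
    refine ⟨z, ⟨hz, ?_⟩, fun z' h' => by
      rw [hunique z' h'.1 h'.2, SimpleGraph.Walk.snd_cons]⟩
    have hle := SimpleGraph.dist_le p
    have htri := hG.connected.dist_triangle (u := x) (v := z) (w := y)
    rw [SimpleGraph.dist_eq_one_iff_adj.2 hz] at htri
    rw [SimpleGraph.Walk.length_cons] at hp
    omega

/-- The radial part of the adjacency operator of the homogeneous tree of degree `Q + 1`: it acts on
functions of the distance to a fixed vertex. -/
def radialAdj {M : Type*} [AddCommMonoid M] (Q : ℕ) (φ : ℕ → M) : ℕ → M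
  | 0 => (Q + 1) • φ 1
  | d + 1 => φ d + Q • φ (d + 2)

variable [∀ v, Fintype (G.neighborSet v)]

theorem sum_neighborFinset_dist {M : Type*} [AddCommMonoid M] {Q : ℕ} (hG : G.IsTree)
    (hdeg : ∀ v, G.degree v = Q + 1) (φ : ℕ → M) (x y : V) :
    ∑ z ∈ G.neighborFinset x, φ (G.dist z y) = radialAdj Q φ (G.dist x y) := by
  classical
  rcases eq_or_ne x y with rfl | hxy
  · have hconst : ∀ z ∈ G.neighborFinset x, φ (G.dist z x) = φ 1 := fun z hz => by
      rw [SimpleGraph.dist_eq_one_iff_adj.2 ((G.mem_neighborFinset x z).1 hz).symm]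
    rw [Finset.sum_congr rfl hconst, Finset.sum_const, SimpleGraph.card_neighborFinset_eq_degree,
      hdeg, SimpleGraph.dist_self, radialAdj]
  · obtain ⟨z, ⟨hz, hd⟩, hunique⟩ := isTree_existsUnique_adj_dist_add_one hG hxy
    have hmem : z ∈ G.neighborFinset x := (G.mem_neighborFinset x z).2 hz
    have hfar : ∀ u ∈ (G.neighborFinset x).erase z, φ (G.dist u y) = φ (G.dist z y + 2) := by
      intro u hu
      rw [Finset.mem_erase, SimpleGraph.mem_neighborFinset] at hu
      have hstep := hG.dist_eq_dist_add_one_of_adj y hu.2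
      rw [SimpleGraph.dist_comm (u := y), SimpleGraph.dist_comm (u := y)] at hstep
      congr 1
      rcases hstep with h | h
      · exact absurd (hunique u ⟨hu.2, h.symm⟩) hu.1
      · omega
    rw [← Finset.add_sum_erase _ _ hmem, Finset.sum_congr rfl hfar, Finset.sum_const,
      Finset.card_erase_of_mem hmem, SimpleGraph.card_neighborFinset_eq_degree, hdeg, ← hd,
      radialAdj, Nat.add_sub_cancel]

theorem radialAdj_inv_sqrt_pow_le {Q : ℕ} (hQ : 0 < Q) (d : ℕ) :
    radialAdj Q (fun n => (√Q : ℝ)⁻¹ ^ n) d ≤ 2 * √Q * (√Q : ℝ)⁻¹ ^ d := by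
  have hQ' : (1 : ℝ) ≤ Q := by exact_mod_cast hQ
  have hb : 0 < √(Q : ℝ) := by positivity
  have hbb : √(Q : ℝ) ^ 2 = Q := Real.sq_sqrt (by positivity)
  cases d with
  | zero =>
    simp only [radialAdj, nsmul_eq_mul, pow_zero, pow_one, mul_one, Nat.cast_add, Nat.cast_one]
    rw [mul_inv_le_iff₀ hb]
    linarith
  | succ d =>
    simp only [radialAdj, nsmul_eq_mul, pow_succ]
    apply le_of_eq
    field_simp
    rw [hbb]
    ring

theorem radialAdj_inv_pow (Q : ℕ) {r : ℝ} (hr : r ≠ 0) (d : ℕ) :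
    radialAdj Q (fun n => r⁻¹ ^ n) d = (r + Q / r) * r⁻¹ ^ d - if d = 0 then r - r⁻¹ else 0 := by
  cases d with
  | zero =>
    simp only [radialAdj, nsmul_eq_mul, pow_zero, pow_one, Nat.cast_add, Nat.cast_one, if_true]
    field_simp
    ring
  | succ d =>
    simp only [radialAdj, nsmul_eq_mul, pow_succ, Nat.succ_ne_zero, if_false, sub_zero]
    field_simp

-- The least `M ≥ 0` with `v ≤ M w` satisfies `l M ≤ μ M + c`.
theorem le_mul_of_mul_le_sum_neighborFinset_add {w v : V → ℝ} {μ l c M : ℝ} (hw : ∀ x, 0 ≤ w x)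
    (hμ : 0 ≤ μ) (hl : μ < l) (hc : 0 ≤ c)
    (hAw : ∀ x, ∑ z ∈ G.neighborFinset x, w z ≤ μ * w x)
    (hAv : ∀ x, l * v x ≤ ∑ z ∈ G.neighborFinset x, v z + c * w x)
    (hM : 0 ≤ M) (hvM : ∀ x, v x ≤ M * w x) (x : V) :
    v x ≤ c / (l - μ) * w x := by
  have hl0 : 0 < l := hμ.trans_lt hl
  set S := {M : ℝ | 0 ≤ M ∧ ∀ x, v x ≤ M * w x}
  have hclosed : IsClosed S := by
    have hS : S = Set.Ici 0 ∩ ⋂ x, {M : ℝ | v x ≤ M * w x} := by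
      ext
      simp only [S, Set.mem_ofPred_eq, Set.mem_inter_iff, Set.mem_Ici, Set.mem_iInter]
    rw [hS]
    exact isClosed_Ici.inter (isClosed_iInter fun x => isClosed_le (by fun_prop) (by fun_prop))
  have hbdd : BddBelow S := ⟨0, fun M hM => hM.1⟩
  obtain ⟨hm0, hm⟩ : sInf S ∈ S := hclosed.csInf_mem ⟨M, hM, hvM⟩ hbdd
  have himproved : (μ * sInf S + c) / l ∈ S := by
    refine ⟨by positivity, fun x => ?_⟩
    rw [div_mul_eq_mul_div, le_div_iff₀ hl0, mul_comm]
    calc l * v x ≤ ∑ z ∈ G.neighborFinset x, v z + c * w x := hAv x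
      _ ≤ sInf S * ∑ z ∈ G.neighborFinset x, w z + c * w x := by
          rw [Finset.mul_sum]
          gcongr with z
          exact hm z
      _ ≤ sInf S * (μ * w x) + c * w x := by
          gcongr
          exact hAw x
      _ = (μ * sInf S + c) * w x := by ring
  have hle : sInf S ≤ c / (l - μ) := by
    have h := csInf_le hbdd himproved
    rw [le_div_iff₀ hl0] at h
    rw [le_div_iff₀ (sub_pos.2 hl)]
    linarith
  exact (hm x).trans (mul_le_mul_of_nonneg_right hle (hw x))

theorem sum_neighborFinset_inv_sqrt_pow_dist_le {Q : ℕ} (hQ : 0 < Q) (hG : G.IsTree)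
    (hdeg : ∀ v, G.degree v = Q + 1) (x o : V) :
    ∑ z ∈ G.neighborFinset x, (√Q : ℝ)⁻¹ ^ G.dist z o ≤ 2 * √Q * (√Q : ℝ)⁻¹ ^ G.dist x o := by
  rw [sum_neighborFinset_dist hG hdeg (fun n => (√Q : ℝ)⁻¹ ^ n)]
  exact radialAdj_inv_sqrt_pow_le hQ _

theorem two_mul_sqrt_lt_add_div {a r : ℝ} (ha : 0 ≤ a) (hr : √a < r) : 2 * √a < r + a / r := by
  have hr0 : 0 < r := (Real.sqrt_nonneg _).trans_lt hr
  have hsq : 0 < (r - √a) ^ 2 / r := div_pos (pow_pos (sub_pos.2 hr) 2) hr0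
  have hid : (r - √a) ^ 2 / r = r + a / r - 2 * √a := by
    field_simp
    rw [sub_sq, Real.sq_sqrt ha]
    ring
  linarith

theorem sum_inv_pow_dist_mul_inv_sqrt_pow_dist_le {Q : ℕ} (hQ : 0 < Q) (hG : G.IsTree)
    (hdeg : ∀ v, G.degree v = Q + 1) {r : ℝ} (hr : √Q < r) (s : Finset V) (x o : V) :
    ∑ z ∈ s, r⁻¹ ^ G.dist x z * (√Q : ℝ)⁻¹ ^ G.dist z o ≤
      (r - r⁻¹) / (r + Q / r - 2 * √Q) * (√Q : ℝ)⁻¹ ^ G.dist x o := by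
  classical
  have hb1 : 1 ≤ √(Q : ℝ) := Real.one_le_sqrt.2 (by exact_mod_cast hQ)
  have hr0 : 0 < r := by linarith
  have hc : 0 ≤ r - r⁻¹ := sub_nonneg.2 ((inv_le_one_of_one_le₀ (by linarith)).trans (by linarith))
  have hcrude (x z : V) : r⁻¹ ^ G.dist x z * (√Q : ℝ)⁻¹ ^ G.dist z o ≤ (√Q : ℝ)⁻¹ ^ G.dist x o :=
    calc _ ≤ (√Q : ℝ)⁻¹ ^ G.dist x z * (√Q : ℝ)⁻¹ ^ G.dist z o := by gcongr
      _ ≤ (√Q : ℝ)⁻¹ ^ G.dist x o := by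
        rw [← pow_add]
        exact pow_le_pow_of_le_one (by positivity) (inv_le_one_of_one_le₀ hb1)
          hG.connected.dist_triangle
  refine le_mul_of_mul_le_sum_neighborFinset_add (M := s.card) (G := G)
    (v := fun x => ∑ z ∈ s, r⁻¹ ^ G.dist x z * (√Q : ℝ)⁻¹ ^ G.dist z o)
    (w := fun x => (√Q : ℝ)⁻¹ ^ G.dist x o) (fun x => by positivity) (by positivity)
    (two_mul_sqrt_lt_add_div (by positivity) hr) hc
    (fun x => sum_neighborFinset_inv_sqrt_pow_dist_le hQ hG hdeg x o) (fun x => ?_)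
    (by positivity) (fun x => ?_) x
  · have hpoint : ∑ z ∈ s, (if x = z then (r - r⁻¹) * (√Q : ℝ)⁻¹ ^ G.dist z o else 0) ≤
        (r - r⁻¹) * (√Q : ℝ)⁻¹ ^ G.dist x o := by
      rw [Finset.sum_ite_eq]
      split_ifs
      · exact le_rfl
      · positivity
    have hrow (z : V) : ∑ u ∈ G.neighborFinset x, r⁻¹ ^ G.dist u z * (√Q : ℝ)⁻¹ ^ G.dist z o =
        (r + Q / r) * (r⁻¹ ^ G.dist x z * (√Q : ℝ)⁻¹ ^ G.dist z o) -
          if x = z then (r - r⁻¹) * (√Q : ℝ)⁻¹ ^ G.dist z o else 0 := by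
      rw [← Finset.sum_mul, sum_neighborFinset_dist hG hdeg (fun n => r⁻¹ ^ n),
        radialAdj_inv_pow Q hr0.ne', sub_mul, ite_mul, zero_mul, mul_assoc]
      simp only [hG.connected.dist_eq_zero_iff]
    rw [Finset.sum_comm, Finset.sum_congr rfl fun z _ => hrow z, Finset.sum_sub_distrib,
      Finset.mul_sum]
    linarith
  · refine (Finset.sum_le_sum fun z _ => hcrude x z).trans_eq ?_
    rw [Finset.sum_const, nsmul_eq_mul]

theorem exists_isSqBoundedKernel_inv_pow_dist {Q : ℕ} (hQ : 0 < Q) (hG : G.IsTree)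
    (hdeg : ∀ v, G.degree v = Q + 1) {r : ℝ} (hr : √Q < r) :
    ∃ C : ℝ, 0 < C ∧
      IsSqBoundedKernel (fun x y => ENNReal.ofReal (r⁻¹ ^ G.dist x y)) (ENNReal.ofReal C) := by
  obtain ⟨o⟩ := hG.connected.nonempty
  have hb : 0 < √(Q : ℝ) := by positivity
  have hb1 : 1 ≤ √(Q : ℝ) := Real.one_le_sqrt.2 (by exact_mod_cast hQ)
  have hr0 : 0 < r := hb.trans hr
  set μ := (r - r⁻¹) / (r + Q / r - 2 * √Q)
  have hμ : 0 < μ := div_pos (sub_pos.2 ((inv_lt_one_of_one_lt₀ (by linarith)).trans (by linarith)))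
    (sub_pos.2 (two_mul_sqrt_lt_add_div (by positivity) hr))
  set w : V → ℝ≥0∞ := fun x => ENNReal.ofReal ((√Q : ℝ)⁻¹ ^ G.dist x o) with hw
  have hrow (x : V) : ∑' y, ENNReal.ofReal (r⁻¹ ^ G.dist x y) * w y ≤ ENNReal.ofReal μ * w x := by
    rw [ENNReal.tsum_eq_iSup_sum]
    refine iSup_le fun s => ?_
    simp only [hw]
    rw [← ENNReal.ofReal_mul hμ.le]
    simp only [← ENNReal.ofReal_mul (pow_nonneg (inv_nonneg.2 hr0.le) _)]
    rw [← ENNReal.ofReal_sum_of_nonneg fun z _ => by positivity]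
    exact ENNReal.ofReal_le_ofReal
      (sum_inv_pow_dist_mul_inv_sqrt_pow_dist_le hQ hG hdeg hr s x o)
  have hcol (y : V) : ∑' x, ENNReal.ofReal (r⁻¹ ^ G.dist x y) * w x ≤ ENNReal.ofReal μ * w y := by
    simpa only [SimpleGraph.dist_comm] using hrow y
  refine ⟨μ * μ, by positivity, ?_⟩
  rw [ENNReal.ofReal_mul hμ.le]
  exact .of_schur (fun y => (ENNReal.ofReal_pos.2 (by positivity)).ne')
    (fun y => ENNReal.ofReal_ne_top) hrow hcol

open Classical in
theorem isSqBoundedKernel_adj {Q : ℕ} (hQ : 0 < Q) (hG : G.IsTree)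
    (hdeg : ∀ v, G.degree v = Q + 1) :
    IsSqBoundedKernel (fun x y => if y ∈ G.neighborFinset x then (1 : ℝ≥0∞) else 0)
      (ENNReal.ofReal (2 * √Q) ^ 2) := by
  obtain ⟨o⟩ := hG.connected.nonempty
  set w : V → ℝ≥0∞ := fun x => ENNReal.ofReal ((√Q : ℝ)⁻¹ ^ G.dist x o) with hw
  have hrow (x : V) : ∑' y, (if y ∈ G.neighborFinset x then (1 : ℝ≥0∞) else 0) * w y ≤
      ENNReal.ofReal (2 * √Q) * w x := by
    simp only [ite_mul, one_mul, zero_mul]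
    rw [tsum_eq_sum (s := G.neighborFinset x) fun y hy => if_neg hy,
      Finset.sum_congr rfl fun y hy => if_pos hy, hw,
      ← ENNReal.ofReal_sum_of_nonneg fun y _ => by positivity,
      ← ENNReal.ofReal_mul (by positivity)]
    exact ENNReal.ofReal_le_ofReal (sum_neighborFinset_inv_sqrt_pow_dist_le hQ hG hdeg x o)
  have hcol (y : V) : ∑' x, (if y ∈ G.neighborFinset x then (1 : ℝ≥0∞) else 0) * w x ≤
      ENNReal.ofReal (2 * √Q) * w y := by
    simpa only [SimpleGraph.mem_neighborFinset, SimpleGraph.adj_comm] using hrow y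
  rw [sq]
  exact .of_schur (fun y => (ENNReal.ofReal_pos.2 (by positivity)).ne')
    (fun y => ENNReal.ofReal_ne_top) hrow hcol

end Tree

section SpectralDensity

open Real

/-- The spectral radius `2√Q / (Q + 1)` of the simple random walk on the homogeneous tree of degree
`Q + 1`. -/
noncomputable def walkRadius (Q : ℕ) : ℝ := 2 * √Q / (Q + 1)

/-- The `ℓ²`-spectrum of the positive Laplacian on the homogeneous tree of degree `Q + 1`. -/
def treeSpectrum (Q : ℕ) : Set ℝ := Set.Icc (1 - walkRadius Q) (1 + walkRadius Q)

/-- The value of the positive Laplacian at the spectral parameter `θ ∈ [0, π]`. -/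
noncomputable def laplaceSymbol (Q : ℕ) (θ : ℝ) : ℝ := 1 - walkRadius Q * cos θ

/-- The numerator of the spherical function of the homogeneous tree, whose value at distance `d` is
`Q ^ (-d / 2) * sphericalWave Q d θ / ((1 + Q⁻¹) * sin θ)`. -/
noncomputable def sphericalWave (Q d : ℕ) (θ : ℝ) : ℝ :=
  sin ((d + 1) * θ) - (Q : ℝ)⁻¹ * sin ((d - 1) * θ)

/-- The Plancherel density `|1 - Q⁻¹ e^{2iθ}|⁻²` of the homogeneous tree, up to the factor
`sin² θ`. -/
noncomputable def plancherelWeight (Q : ℕ) (θ : ℝ) : ℝ :=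
  (1 - 2 * (Q : ℝ)⁻¹ * cos (2 * θ) + (Q : ℝ)⁻¹ ^ 2)⁻¹

/-- The product of the Plancherel density and the spherical function at distance `d`, up to a factor
`sin θ`. -/
noncomputable def treeDensity (Q d : ℕ) (θ : ℝ) : ℝ :=
  (√Q : ℝ)⁻¹ ^ d * (sphericalWave Q d θ * plancherelWeight Q θ)

theorem walkRadius_pos {Q : ℕ} (hQ : 0 < Q) : 0 < walkRadius Q := by
  unfold walkRadius
  positivity

theorem walkRadius_lt_one {Q : ℕ} (hQ : 2 ≤ Q) : walkRadius Q < 1 := by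
  have hQ' : (2 : ℝ) ≤ Q := by exact_mod_cast hQ
  have hlt : 1 < √(Q : ℝ) := lt_sqrt_of_sq_lt (by linarith)
  have hsq : √(Q : ℝ) ^ 2 = Q := sq_sqrt (by positivity)
  rw [walkRadius, div_lt_one (by positivity)]
  nlinarith [sq_pos_of_pos (sub_pos.2 hlt)]

theorem pos_of_mem_treeSpectrum {Q : ℕ} (hQ : 2 ≤ Q) {s : ℝ} (hs : s ∈ treeSpectrum Q) : 0 < s :=
  (sub_pos.2 (walkRadius_lt_one hQ)).trans_le hs.1

theorem laplaceSymbol_mem_treeSpectrum (Q : ℕ) (θ : ℝ) : laplaceSymbol Q θ ∈ treeSpectrum Q := by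
  have hγ : 0 ≤ walkRadius Q := by unfold walkRadius; positivity
  have h := abs_le.1 (abs_cos_le_one θ)
  constructor <;> unfold laplaceSymbol <;> nlinarith

theorem contDiff_laplaceSymbol (Q : ℕ) {n : WithTop ℕ∞} : ContDiff ℝ n (laplaceSymbol Q) := by
  unfold laplaceSymbol
  fun_prop

theorem continuous_laplaceSymbol (Q : ℕ) : Continuous (laplaceSymbol Q) :=
  (contDiff_laplaceSymbol Q (n := 0)).continuous

theorem deriv_laplaceSymbol (Q : ℕ) (θ : ℝ) : deriv (laplaceSymbol Q) θ = walkRadius Q * sin θ := by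
  have h : HasDerivAt (laplaceSymbol Q) (-(walkRadius Q * -sin θ)) θ :=
    ((hasDerivAt_cos θ).const_mul _).const_sub 1
  rw [h.deriv]
  ring

theorem contDiff_sphericalWave (Q d : ℕ) {n : WithTop ℕ∞} : ContDiff ℝ n (sphericalWave Q d) := by
  unfold sphericalWave
  fun_prop

theorem sq_one_sub_inv_le_plancherel_denominator (Q : ℕ) (θ : ℝ) :
    (1 - (Q : ℝ)⁻¹) ^ 2 ≤ 1 - 2 * (Q : ℝ)⁻¹ * cos (2 * θ) + (Q : ℝ)⁻¹ ^ 2 := by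
  have hq : 0 ≤ (Q : ℝ)⁻¹ := by positivity
  nlinarith [cos_le_one (2 * θ)]

theorem inv_natCast_lt_one {Q : ℕ} (hQ : 2 ≤ Q) : (Q : ℝ)⁻¹ < 1 :=
  inv_lt_one_of_one_lt₀ (by exact_mod_cast hQ)

theorem plancherel_denominator_pos {Q : ℕ} (hQ : 2 ≤ Q) (θ : ℝ) :
    0 < 1 - 2 * (Q : ℝ)⁻¹ * cos (2 * θ) + (Q : ℝ)⁻¹ ^ 2 :=
  (pow_pos (sub_pos.2 (inv_natCast_lt_one hQ)) 2).trans_le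
    (sq_one_sub_inv_le_plancherel_denominator Q θ)

theorem abs_plancherelWeight_le {Q : ℕ} (hQ : 2 ≤ Q) (θ : ℝ) :
    |plancherelWeight Q θ| ≤ ((1 - (Q : ℝ)⁻¹) ^ 2)⁻¹ := by
  rw [plancherelWeight, abs_of_pos (inv_pos.2 (plancherel_denominator_pos hQ θ))]
  exact inv_anti₀ (pow_pos (sub_pos.2 (inv_natCast_lt_one hQ)) 2)
    (sq_one_sub_inv_le_plancherel_denominator Q θ)

theorem contDiff_plancherelWeight {Q : ℕ} (hQ : 2 ≤ Q) {n : WithTop ℕ∞} :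
    ContDiff ℝ n (plancherelWeight Q) :=
  ContDiff.inv (by fun_prop) fun θ => (plancherel_denominator_pos hQ θ).ne'

theorem continuous_treeDensity {Q : ℕ} (hQ : 2 ≤ Q) (d : ℕ) : Continuous (treeDensity Q d) :=
  ((contDiff_sphericalWave Q d (n := 0)).continuous.mul
    (contDiff_plancherelWeight hQ (n := 0)).continuous).const_mul _

theorem abs_sub_inv_natCast_mul_le (Q : ℕ) {a b u v B : ℝ} (ha : |a| ≤ B) (hb : |b| ≤ B)
    (hu : |u| ≤ 1) (hv : |v| ≤ 1) : |a * u - (Q : ℝ)⁻¹ * (b * v)| ≤ 2 * B := by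
  have hQ : |(Q : ℝ)⁻¹| ≤ 1 := by
    rw [abs_of_nonneg (by positivity)]
    exact Nat.cast_inv_le_one Q
  have hB : 0 ≤ B := (abs_nonneg a).trans ha
  calc |a * u - (Q : ℝ)⁻¹ * (b * v)|
      ≤ |a| * |u| + |(Q : ℝ)⁻¹| * (|b| * |v|) := by
        simpa only [abs_mul] using abs_sub (a * u) ((Q : ℝ)⁻¹ * (b * v))
    _ ≤ B * 1 + 1 * (B * 1) := by gcongr
    _ = 2 * B := by ring

theorem abs_sphericalWave_le (Q d : ℕ) (θ : ℝ) : |sphericalWave Q d θ| ≤ 2 := by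
  simpa only [one_mul, mul_one, sphericalWave] using
    abs_sub_inv_natCast_mul_le Q abs_one.le abs_one.le (abs_sin_le_one _) (abs_sin_le_one _)

theorem sphericalWave_add_sphericalWave (Q d : ℕ) (θ : ℝ) :
    sphericalWave Q d θ + sphericalWave Q (d + 2) θ = 2 * cos θ * sphericalWave Q (d + 1) θ := by
  have hsum (a : ℝ) : sin (a - θ) + sin (a + θ) = 2 * cos θ * sin a := by
    rw [sin_sub, sin_add]
    ring
  have h₁ := hsum ((d + 2) * θ)
  have h₂ := hsum (d * θ)
  simp only [sphericalWave]
  push_cast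
  ring_nf at h₁ h₂ ⊢
  linear_combination h₁ - (Q : ℝ)⁻¹ * h₂

theorem one_add_inv_mul_sphericalWave_one (Q : ℕ) (θ : ℝ) :
    (1 + (Q : ℝ)⁻¹) * sphericalWave Q 1 θ = 2 * cos θ * sphericalWave Q 0 θ := by
  simp only [sphericalWave, Nat.cast_one, Nat.cast_zero, one_add_one_eq_two, sin_two_mul, sub_self,
    zero_mul, sin_zero, zero_add, zero_sub, one_mul, neg_mul, sin_neg]
  ring

theorem sphericalWave_sub_inv_mul_sphericalWave {Q : ℕ} (hQ : 2 ≤ Q) (d : ℕ) (θ : ℝ) :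
    (sphericalWave Q d θ - (Q : ℝ)⁻¹ * sphericalWave Q (d + 2) θ) * plancherelWeight Q θ =
      sin ((d + 1) * θ) := by
  have hsum : sin ((d - 1) * θ) + sin ((d + 3) * θ) = 2 * cos (2 * θ) * sin ((d + 1) * θ) := by
    rw [show ((d : ℝ) - 1) * θ = (d + 1) * θ - 2 * θ by ring,
      show ((d : ℝ) + 3) * θ = (d + 1) * θ + 2 * θ by ring, sin_sub, sin_add]
    ring
  rw [plancherelWeight, mul_inv_eq_iff_eq_mul₀ (plancherel_denominator_pos hQ θ).ne']
  simp only [sphericalWave]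
  push_cast
  ring_nf at hsum ⊢
  linear_combination -(Q : ℝ)⁻¹ * hsum

theorem radialAdj_treeDensity {Q : ℕ} (hQ : 0 < Q) (d : ℕ) (θ : ℝ) :
    radialAdj Q (fun n => treeDensity Q n θ) d = 2 * √Q * cos θ * treeDensity Q d θ := by
  have hb : √(Q : ℝ) ≠ 0 := by positivity
  have hbb : √(Q : ℝ) ^ 2 = Q := sq_sqrt (by positivity)
  cases d with
  | zero =>
    have h := one_add_inv_mul_sphericalWave_one Q θ
    simp only [radialAdj, treeDensity, nsmul_eq_mul, pow_zero, pow_one, Nat.cast_add, Nat.cast_one]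
    field_simp at h ⊢
    rw [hbb]
    linear_combination plancherelWeight Q θ * h
  | succ d =>
    have h := sphericalWave_add_sphericalWave Q d θ
    simp only [radialAdj, treeDensity, nsmul_eq_mul, pow_succ]
    field_simp
    rw [hbb]
    linear_combination Q * plancherelWeight Q θ * h

theorem integral_sin_mul_sin_nat_add_one_mul (n : ℕ) :
    ∫ θ in (0 : ℝ)..π, sin θ * sin ((n + 1) * θ) = if n = 0 then π / 2 else 0 := by
  have hcos (m : ℕ) (hm : m ≠ 0) : ∫ θ in (0 : ℝ)..π, cos (m * θ) = 0 := by
    rw [intervalIntegral.integral_comp_mul_left _ (Nat.cast_ne_zero.2 hm), integral_cos, mul_zero,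
      sin_zero, sin_nat_mul_pi, sub_zero, smul_zero]
  have hprod (θ : ℝ) : sin θ * sin ((n + 1) * θ) =
      1 / 2 * (cos (n * θ) - cos ((n + 2 : ℕ) * θ)) := by
    rw [show (n : ℝ) * θ = (n + 1) * θ - θ by ring,
      show ((n + 2 : ℕ) : ℝ) * θ = (n + 1) * θ + θ by push_cast; ring, cos_sub, cos_add]
    ring
  simp only [hprod]
  rw [intervalIntegral.integral_const_mul, intervalIntegral.integral_sub
    (Continuous.intervalIntegrable (by fun_prop) _ _)
    (Continuous.intervalIntegrable (by fun_prop) _ _), hcos (n + 2) (by omega), sub_zero]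
  split_ifs with hn
  · simp only [hn, Nat.cast_zero, zero_mul, cos_zero, intervalIntegral.integral_const, sub_zero,
      smul_eq_mul, mul_one]
    ring
  · rw [hcos n hn, mul_zero]

theorem eq_zero_of_eq_mul_add_two {a : ℕ → ℝ} {ρ B : ℝ} (hρ0 : 0 ≤ ρ) (hρ : ρ < 1)
    (hB : ∀ d, |a d| ≤ B) (ha : ∀ d, d ≠ 0 → a d = ρ * a (d + 2)) {d : ℕ} (hd : d ≠ 0) :
    a d = 0 := by
  have hiterate (k : ℕ) : |a d| ≤ ρ ^ k * B := by
    induction k generalizing d with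
    | zero => simpa using hB d
    | succ k ih =>
      rw [ha d hd, abs_mul, abs_of_nonneg hρ0, pow_succ', mul_assoc]
      gcongr
      exact ih (by omega)
  have hlim : Filter.Tendsto (fun k : ℕ => ρ ^ k * B) Filter.atTop (nhds 0) := by
    simpa using (tendsto_pow_atTop_nhds_zero_of_lt_one hρ0 hρ).mul_const B
  exact abs_nonpos_iff.1 (ge_of_tendsto' hlim hiterate)

theorem integral_sin_mul_sphericalWave {Q : ℕ} (hQ : 2 ≤ Q) (d : ℕ) :
    ∫ θ in (0 : ℝ)..π, sin θ * (sphericalWave Q d θ * plancherelWeight Q θ) =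
      if d = 0 then π / 2 else 0 := by
  set J : ℕ → ℝ := fun d => ∫ θ in (0 : ℝ)..π,
    sin θ * (sphericalWave Q d θ * plancherelWeight Q θ) with hJ
  have hcont (d : ℕ) : Continuous fun θ => sin θ * (sphericalWave Q d θ * plancherelWeight Q θ) :=
    continuous_sin.mul ((contDiff_sphericalWave Q d (n := 0)).continuous.mul
      (contDiff_plancherelWeight hQ (n := 0)).continuous)
  have hrec (d : ℕ) : J d = (Q : ℝ)⁻¹ * J (d + 2) + if d = 0 then π / 2 else 0 := by
    rw [← integral_sin_mul_sin_nat_add_one_mul, hJ, ← intervalIntegral.integral_const_mul,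
      ← intervalIntegral.integral_add (((hcont _).const_mul _).intervalIntegrable _ _)
        (Continuous.intervalIntegrable (by fun_prop) _ _)]
    refine intervalIntegral.integral_congr fun θ _ => ?_
    simp only [← sphericalWave_sub_inv_mul_sphericalWave hQ]
    ring
  have hbound (d : ℕ) : |J d| ≤ 1 * (2 * ((1 - (Q : ℝ)⁻¹) ^ 2)⁻¹) * |π - 0| := by
    rw [← norm_eq_abs]
    refine intervalIntegral.norm_integral_le_of_norm_le_const fun θ _ => ?_
    rw [norm_mul, norm_mul]
    exact mul_le_mul (abs_sin_le_one θ) (mul_le_mul (abs_sphericalWave_le Q d θ)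
      (abs_plancherelWeight_le hQ θ) (abs_nonneg _) zero_le_two) (by positivity) zero_le_one
  have hzero {d : ℕ} : d ≠ 0 → J d = 0 :=
    eq_zero_of_eq_mul_add_two (by positivity) (inv_natCast_lt_one hQ) hbound
      fun d hd => by rw [hrec d, if_neg hd, add_zero]
  split_ifs with hd
  · change J d = _
    rw [hrec, hzero (by omega), if_pos hd, mul_zero, zero_add]
  · exact hzero hd

theorem integral_sin_mul_treeDensity {Q : ℕ} (hQ : 2 ≤ Q) (d : ℕ) :
    ∫ θ in (0 : ℝ)..π, sin θ * treeDensity Q d θ = if d = 0 then π / 2 else 0 := by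
  simp only [treeDensity, mul_left_comm (sin _) ((√Q : ℝ)⁻¹ ^ d)]
  rw [intervalIntegral.integral_const_mul, integral_sin_mul_sphericalWave hQ]
  split_ifs with hd
  · rw [hd, pow_zero, one_mul]
  · rw [mul_zero]

end SpectralDensity

section FunctionalCalculus

/-- The kernel, as a function of the distance, of `F` applied to the positive Laplacian: the
spherical inversion formula. -/
noncomputable def treeKernel (Q : ℕ) (F : ℝ → ℂ) (d : ℕ) : ℂ :=
  (2 / Real.pi) • ∫ θ in (0 : ℝ)..Real.pi, (Real.sin θ * treeDensity Q d θ) • F (laplaceSymbol Q θ)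

theorem intervalIntegrable_sin_mul_treeDensity_smul {Q : ℕ} (hQ : 2 ≤ Q) {F : ℝ → ℂ}
    (hF : ContinuousOn F (treeSpectrum Q)) (d : ℕ) :
    IntervalIntegrable (fun θ => (Real.sin θ * treeDensity Q d θ) • F (laplaceSymbol Q θ))
      volume 0 Real.pi :=
  ((Real.continuous_sin.mul (continuous_treeDensity hQ d)).smul
    (hF.comp_continuous (continuous_laplaceSymbol Q)
      (laplaceSymbol_mem_treeSpectrum Q))).intervalIntegrable _ _

theorem norm_treeKernel_le {Q : ℕ} (hQ : 2 ≤ Q) {F : ℝ → ℂ} {c : ℝ}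
    (hc : ∀ s ∈ treeSpectrum Q, ‖F s‖ ≤ c) (d : ℕ) :
    ‖treeKernel Q F d‖ ≤ 4 * ((1 - (Q : ℝ)⁻¹) ^ 2)⁻¹ * c * (√Q : ℝ)⁻¹ ^ d := by
  have hdensity (θ : ℝ) :
      |treeDensity Q d θ| ≤ (√Q : ℝ)⁻¹ ^ d * (2 * ((1 - (Q : ℝ)⁻¹) ^ 2)⁻¹) := by
    rw [treeDensity, abs_mul, abs_mul, abs_of_nonneg (a := (√Q : ℝ)⁻¹ ^ d) (by positivity)]
    gcongr
    · exact abs_sphericalWave_le Q d θ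
    · exact abs_plancherelWeight_le hQ θ
  have hintegral := intervalIntegral.norm_integral_le_of_norm_le_const (a := 0) (b := Real.pi)
    (f := fun θ => (Real.sin θ * treeDensity Q d θ) • F (laplaceSymbol Q θ))
    (C := 1 * ((√Q : ℝ)⁻¹ ^ d * (2 * ((1 - (Q : ℝ)⁻¹) ^ 2)⁻¹)) * c) fun θ _ => by
      rw [norm_smul, norm_mul]
      gcongr
      · exact Real.abs_sin_le_one θ
      · exact hdensity θ
      · exact hc _ (laplaceSymbol_mem_treeSpectrum Q θ)
  rw [sub_zero, abs_of_pos Real.pi_pos] at hintegral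
  rw [treeKernel, norm_smul, Real.norm_of_nonneg (by positivity)]
  calc _ ≤ 2 / Real.pi *
        (1 * ((√Q : ℝ)⁻¹ ^ d * (2 * ((1 - (Q : ℝ)⁻¹) ^ 2)⁻¹)) * c * Real.pi) := by gcongr
    _ = _ := by
        field_simp
        ring

theorem treeKernel_add {Q : ℕ} (hQ : 2 ≤ Q) {F₁ F₂ : ℝ → ℂ} (hF₁ : ContinuousOn F₁ (treeSpectrum Q))
    (hF₂ : ContinuousOn F₂ (treeSpectrum Q)) (d : ℕ) :
    treeKernel Q (fun s => F₁ s + F₂ s) d = treeKernel Q F₁ d + treeKernel Q F₂ d := by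
  simp only [treeKernel, smul_add]
  rw [intervalIntegral.integral_add (intervalIntegrable_sin_mul_treeDensity_smul hQ hF₁ d)
    (intervalIntegrable_sin_mul_treeDensity_smul hQ hF₂ d), smul_add]

theorem treeKernel_const_mul (Q : ℕ) (F : ℝ → ℂ) (a : ℂ) (d : ℕ) :
    treeKernel Q (fun s => a * F s) d = a * treeKernel Q F d := by
  simp only [treeKernel, ← mul_smul_comm, intervalIntegral.integral_const_mul]

theorem treeKernel_sub {Q : ℕ} (hQ : 2 ≤ Q) {F₁ F₂ : ℝ → ℂ} (hF₁ : ContinuousOn F₁ (treeSpectrum Q))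
    (hF₂ : ContinuousOn F₂ (treeSpectrum Q)) (d : ℕ) :
    treeKernel Q (fun s => F₁ s - F₂ s) d = treeKernel Q F₁ d - treeKernel Q F₂ d := by
  simp only [treeKernel, smul_sub]
  rw [intervalIntegral.integral_sub (intervalIntegrable_sin_mul_treeDensity_smul hQ hF₁ d)
    (intervalIntegrable_sin_mul_treeDensity_smul hQ hF₂ d), smul_sub]

theorem treeKernel_one {Q : ℕ} (hQ : 2 ≤ Q) (d : ℕ) :
    treeKernel Q (fun _ => 1) d = if d = 0 then 1 else 0 := by
  simp only [treeKernel, Complex.real_smul, mul_one]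
  rw [intervalIntegral.integral_ofReal, integral_sin_mul_treeDensity hQ, ← Complex.ofReal_mul]
  have hπ := Real.pi_ne_zero
  split_ifs
  · norm_cast
    field_simp
  · rw [mul_zero, Complex.ofReal_zero]

theorem radialAdj_treeKernel_eq_integral {Q : ℕ} (hQ : 2 ≤ Q) {F : ℝ → ℂ}
    (hF : ContinuousOn F (treeSpectrum Q)) (d : ℕ) :
    radialAdj Q (treeKernel Q F) d = (2 / Real.pi) • ∫ θ in (0 : ℝ)..Real.pi,
      (Real.sin θ * radialAdj Q (fun n => treeDensity Q n θ) d) • F (laplaceSymbol Q θ) := by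
  have hint := intervalIntegrable_sin_mul_treeDensity_smul hQ hF
  have hmul (a : ℝ) (n : ℕ) (θ : ℝ) :
      (Real.sin θ * (a * treeDensity Q n θ)) • F (laplaceSymbol Q θ) =
        a • (Real.sin θ * treeDensity Q n θ) • F (laplaceSymbol Q θ) := by
    rw [mul_left_comm, mul_smul]
  cases d with
  | zero =>
    simp only [radialAdj, treeKernel, ← Nat.cast_smul_eq_nsmul ℝ, smul_eq_mul, hmul]
    rw [intervalIntegral.integral_smul, smul_comm]
  | succ d =>
    have hsmul : IntervalIntegrable (fun θ => (Q : ℝ) •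
        (Real.sin θ * treeDensity Q (d + 2) θ) • F (laplaceSymbol Q θ)) volume 0 Real.pi :=
      (hint (d + 2)).smul (Q : ℝ)
    simp only [radialAdj, treeKernel, ← Nat.cast_smul_eq_nsmul ℝ, smul_eq_mul, mul_add, add_smul,
      hmul]
    rw [intervalIntegral.integral_add (hint d) hsmul, intervalIntegral.integral_smul, smul_add,
      smul_comm (Q : ℝ)]

theorem radialAdj_treeKernel {Q : ℕ} (hQ : 2 ≤ Q) {F : ℝ → ℂ} (hF : ContinuousOn F (treeSpectrum Q))
    (d : ℕ) :
    radialAdj Q (treeKernel Q F) d = (Q + 1) * treeKernel Q (fun s => (1 - s) * F s) d := by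
  have hsymbol (θ : ℝ) : (2 * √Q * Real.cos θ : ℝ) = (Q + 1) * (1 - laplaceSymbol Q θ) := by
    rw [laplaceSymbol, walkRadius]
    field_simp
    ring
  rw [radialAdj_treeKernel_eq_integral hQ hF, ← treeKernel_const_mul, treeKernel]
  simp only [radialAdj_treeDensity (show 0 < Q by omega), hsymbol, Complex.real_smul]
  push_cast
  simp only [mul_assoc, mul_left_comm]

theorem exists_polynomial_complex_near_of_continuousOn {a b : ℝ} {f : ℝ → ℂ}
    (hf : ContinuousOn f (Set.Icc a b)) {ε : ℝ} (hε : 0 < ε) :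
    ∃ p : Polynomial ℂ, ∀ s ∈ Set.Icc a b, ‖p.eval (s : ℂ) - f s‖ < ε := by
  obtain ⟨p, hp⟩ := exists_polynomial_near_of_continuousOn a b (fun s => (f s).re)
    (Complex.continuous_re.comp_continuousOn hf) (ε / 2) (half_pos hε)
  obtain ⟨q, hq⟩ := exists_polynomial_near_of_continuousOn a b (fun s => (f s).im)
    (Complex.continuous_im.comp_continuousOn hf) (ε / 2) (half_pos hε)
  refine ⟨p.map Complex.ofRealHom + Polynomial.C Complex.I * q.map Complex.ofRealHom,
    fun s hs => ?_⟩
  have heval (r : Polynomial ℝ) : (r.map Complex.ofRealHom).eval (s : ℂ) = (r.eval s : ℝ) :=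
    Polynomial.eval_map_apply Complex.ofRealHom s
  refine (Complex.norm_le_abs_re_add_abs_im _).trans_lt ?_
  simpa [heval] using add_lt_add (hp s hs) (hq s hs)

variable {V : Type*} {G : SimpleGraph V} [∀ v, Fintype (G.neighborSet v)] {Q : ℕ}
  {Δ : lp (fun _ : V => ℂ) 2 →L[ℂ] lp (fun _ : V => ℂ) 2}

/-- `Δ` acts on `ℓ²` as the combinatorial Laplacian of the `(Q + 1)`-regular graph `G`. -/
def IsCombinatorialLaplacian (G : SimpleGraph V) [∀ v, Fintype (G.neighborSet v)] (Q : ℕ)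
    (Δ : lp (fun _ : V => ℂ) 2 →L[ℂ] lp (fun _ : V => ℂ) 2) : Prop :=
  ∀ f x, Δ f x = ((Q : ℂ) + 1)⁻¹ * (∑ y ∈ G.neighborFinset x, f y) - f x

theorem neg_pow_apply_single [DecidableEq V] (hQ : 2 ≤ Q) (hG : G.IsTree)
    (hdeg : ∀ v, G.degree v = Q + 1) (hΔ : IsCombinatorialLaplacian G Q Δ) (n : ℕ) (x y : V) :
    ((-Δ) ^ n) (lp.single 2 y 1) x = treeKernel Q (fun s => s ^ n) (G.dist x y) := by
  induction n generalizing x with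
  | zero =>
    simp only [pow_zero, treeKernel_one hQ, hG.connected.dist_eq_zero_iff]
    rw [one_apply_eq_self, lp.single_apply, Pi.single_apply]
  | succ n ih =>
    have hcont : ContinuousOn (fun s : ℝ => (s : ℂ) ^ n) (treeSpectrum Q) := by fun_prop
    have hQ1 : (Q : ℂ) + 1 ≠ 0 := by exact_mod_cast Q.succ_ne_zero
    have hdifference : (fun s : ℝ => (s : ℂ) ^ (n + 1)) =
        fun s : ℝ => (s : ℂ) ^ n - (1 - (s : ℂ)) * (s : ℂ) ^ n := by
      ext s
      ring
    have happly : ((-Δ) ^ (n + 1)) (lp.single 2 y 1) x =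
        -(Δ (((-Δ) ^ n) (lp.single 2 y 1)) x) := by
      rw [pow_succ']
      rfl
    rw [happly, hΔ]
    simp only [ih]
    rw [sum_neighborFinset_dist hG hdeg, radialAdj_treeKernel hQ hcont,
      inv_mul_cancel_left₀ hQ1, neg_sub, hdifference, treeKernel_sub hQ hcont (by fun_prop)]

theorem aeval_neg_apply_single [DecidableEq V] (hQ : 2 ≤ Q) (hG : G.IsTree)
    (hdeg : ∀ v, G.degree v = Q + 1) (hΔ : IsCombinatorialLaplacian G Q Δ) (p : Polynomial ℂ)
    (x y : V) :
    (Polynomial.aeval (-Δ) p) (lp.single 2 y 1) x =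
      treeKernel Q (fun s => p.eval (s : ℂ)) (G.dist x y) := by
  induction p using Polynomial.induction_on' with
  | add p q hp hq =>
    simp only [map_add, Polynomial.eval_add]
    rw [treeKernel_add hQ (by fun_prop) (by fun_prop), ← hp, ← hq]
    rfl
  | monomial n a =>
    simp only [Polynomial.eval_monomial]
    rw [treeKernel_const_mul, ← neg_pow_apply_single hQ hG hdeg hΔ, Polynomial.aeval_monomial,
      Algebra.algebraMap_eq_smul_one, smul_mul_assoc, one_mul]
    rfl

theorem norm_laplacian_add_one_le (hQ : 0 < Q) (hG : G.IsTree) (hdeg : ∀ v, G.degree v = Q + 1)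
    (hΔ : IsCombinatorialLaplacian G Q Δ) : ‖Δ + 1‖ ≤ walkRadius Q := by
  classical
  have hnorm : ‖((Q : ℂ) + 1) • (Δ + 1)‖ ≤ 2 * √Q := by
    refine (isSqBoundedKernel_adj hQ hG hdeg).opNorm_le (by positivity) fun f x => ?_
    have hadj : (((Q : ℂ) + 1) • (Δ + 1)) f x = ∑ y ∈ G.neighborFinset x, f y := by
      change ((Q : ℂ) + 1) * (Δ f x + f x) = _
      have hQ1 : (Q : ℂ) + 1 ≠ 0 := by exact_mod_cast Q.succ_ne_zero
      rw [hΔ, sub_add_cancel, mul_inv_cancel_left₀ hQ1]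
    simp only [ite_mul, one_mul, zero_mul]
    rw [hadj, tsum_eq_sum (s := G.neighborFinset x) fun y hy => if_neg hy,
      Finset.sum_congr rfl fun y hy => if_pos hy]
    exact enorm_sum_le _ _
  rw [norm_smul, ← Nat.cast_succ, Complex.norm_natCast] at hnorm
  rw [walkRadius, le_div_iff₀ (by positivity), mul_comm]
  exact_mod_cast hnorm

open scoped Pointwise in
theorem spectrum_neg_laplacian_subset (hQ : 0 < Q) (hG : G.IsTree)
    (hdeg : ∀ v, G.degree v = Q + 1) (hΔ : IsCombinatorialLaplacian G Q Δ)
    (hsa : IsSelfAdjoint Δ) : spectrum ℂ (-Δ) ⊆ (↑) '' treeSpectrum Q := by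
  classical
  intro z hz
  have hre : z = z.re := hsa.neg.mem_spectrum_eq_re hz
  obtain ⟨o⟩ := hG.connected.nonempty
  have : Nontrivial (lp (fun _ : V => ℂ) 2) :=
    ⟨lp.single 2 o 1, 0, fun h => by simpa using congrArg (fun f => f o) h⟩
  have hmem : 1 - z ∈ spectrum ℂ (Δ + 1) := by
    have h : 1 - z ∈ ({1} : Set ℂ) - spectrum ℂ (-Δ) := Set.sub_mem_sub (Set.mem_singleton 1) hz
    rwa [spectrum.singleton_sub_eq, map_one, sub_neg_eq_add, add_comm] at h
  have hle : |1 - z.re| ≤ walkRadius Q := by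
    have h := (Complex.abs_re_le_norm (1 - z)).trans ((spectrum.norm_le_norm_of_mem hmem).trans
      (norm_laplacian_add_one_le hQ hG hdeg hΔ))
    rwa [Complex.sub_re, Complex.one_re] at h
  rw [abs_le] at hle
  exact ⟨z.re, ⟨by linarith, by linarith⟩, hre.symm⟩

theorem continuousOn_comp_re_spectrum (hQ : 0 < Q) (hG : G.IsTree)
    (hdeg : ∀ v, G.degree v = Q + 1) (hΔ : IsCombinatorialLaplacian G Q Δ)
    (hsa : IsSelfAdjoint Δ) {F : ℝ → ℂ} (hF : ContinuousOn F (treeSpectrum Q)) :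
    ContinuousOn (fun z : ℂ => F z.re) (spectrum ℂ (-Δ)) := by
  refine hF.comp Complex.continuous_re.continuousOn fun z hz => ?_
  obtain ⟨s, hs, rfl⟩ := spectrum_neg_laplacian_subset hQ hG hdeg hΔ hsa hz
  rwa [Complex.ofReal_re]

theorem norm_apply_single_le [DecidableEq V] (T : lp (fun _ : V => ℂ) 2 →L[ℂ] lp (fun _ : V => ℂ) 2)
    (x y : V) : ‖T (lp.single 2 y 1) x‖ ≤ ‖T‖ := calc
  ‖T (lp.single 2 y 1) x‖ ≤ ‖T (lp.single 2 y 1)‖ := lp.norm_apply_le_norm (by simp) _ x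
  _ ≤ ‖T‖ * ‖lp.single (E := fun _ : V => ℂ) 2 y 1‖ := T.le_opNorm _
  _ = ‖T‖ := by rw [lp.norm_single (by simp), norm_one, mul_one]

theorem cfc_neg_laplacian_apply_single [DecidableEq V] (hQ : 2 ≤ Q) (hG : G.IsTree)
    (hdeg : ∀ v, G.degree v = Q + 1) (hΔ : IsCombinatorialLaplacian G Q Δ)
    (hsa : IsSelfAdjoint Δ) {F : ℝ → ℂ} (hF : ContinuousOn F (treeSpectrum Q)) (x y : V) :
    cfc (fun z : ℂ => F z.re) (-Δ) (lp.single 2 y 1) x = treeKernel Q F (G.dist x y) := by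
  have hQ0 : 0 < Q := by omega
  have hspectrum := spectrum_neg_laplacian_subset hQ0 hG hdeg hΔ hsa
  have hcont := continuousOn_comp_re_spectrum hQ0 hG hdeg hΔ hsa hF
  have hnormal : IsStarNormal (-Δ) := hsa.neg.isStarNormal
  set c := 4 * ((1 - (Q : ℝ)⁻¹) ^ 2)⁻¹ * (√Q : ℝ)⁻¹ ^ G.dist x y
  have hc : 0 ≤ c := by positivity
  refine eq_of_forall_dist_le fun ε hε => ?_
  set δ := ε / (1 + c)
  have hδ : 0 < δ := by positivity
  obtain ⟨p, hp⟩ := exists_polynomial_complex_near_of_continuousOn hF hδ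
  have hoperator : ‖cfc (fun z : ℂ => F z.re) (-Δ) - Polynomial.aeval (-Δ) p‖ ≤ δ := by
    rw [← cfc_polynomial p (-Δ) hnormal, ← cfc_sub _ _ (-Δ) hcont (by fun_prop)]
    refine norm_cfc_le hδ.le fun z hz => ?_
    obtain ⟨s, hs, rfl⟩ := hspectrum hz
    rw [norm_sub_rev]
    exact (hp s hs).le
  have hkernel : ‖treeKernel Q (fun s => p.eval (s : ℂ)) (G.dist x y) -
      treeKernel Q F (G.dist x y)‖ ≤ c * δ := by
    rw [← treeKernel_sub hQ (by fun_prop) hF]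
    exact (norm_treeKernel_le hQ (fun s hs => (hp s hs).le) _).trans_eq (by ring)
  calc dist (cfc (fun z : ℂ => F z.re) (-Δ) (lp.single 2 y 1) x) (treeKernel Q F (G.dist x y))
      ≤ ‖cfc (fun z : ℂ => F z.re) (-Δ) (lp.single 2 y 1) x -
            Polynomial.aeval (-Δ) p (lp.single 2 y 1) x‖ +
          ‖Polynomial.aeval (-Δ) p (lp.single 2 y 1) x - treeKernel Q F (G.dist x y)‖ := by
        rw [dist_eq_norm]
        exact norm_sub_le_norm_sub_add_norm_sub _ _ _
    _ ≤ δ + c * δ := by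
        refine add_le_add ((norm_apply_single_le _ x y).trans hoperator) ?_
        rwa [aeval_neg_apply_single hQ hG hdeg hΔ]
    _ = ε := by
        simp only [δ]
        field_simp

theorem hasSum_apply_single [DecidableEq V] (T : lp (fun _ : V => ℂ) 2 →L[ℂ] lp (fun _ : V => ℂ) 2)
    (f : lp (fun _ : V => ℂ) 2) (x : V) :
    HasSum (fun y => f y * T (lp.single 2 y 1) x) (T f x) := by
  have hsum :=
    ((lp.hasSum_single (by simp) f).mapL T).mapL (lp.evalCLM ℂ (fun _ : V => ℂ) (p := 2) x)
  have hsingle (y : V) : lp.single (E := fun _ : V => ℂ) 2 y (f y) = f y • lp.single 2 y 1 := by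
    rw [← lp.single_smul, smul_eq_mul, mul_one]
  simp only [hsingle, map_smul] at hsum
  exact hsum

theorem enorm_apply_le_tsum [DecidableEq V] (T : lp (fun _ : V => ℂ) 2 →L[ℂ] lp (fun _ : V => ℂ) 2)
    (f : lp (fun _ : V => ℂ) 2) (x : V) :
    ‖T f x‖ₑ ≤ ∑' y, ‖T (lp.single 2 y 1) x‖ₑ * ‖f y‖ₑ := by
  rw [← (hasSum_apply_single T f x).tsum_eq]
  refine enorm_tsum_le_tsum_enorm.trans_eq ?_
  simp only [enorm_mul, mul_comm]

end FunctionalCalculus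

section OscillatoryIntegrals

open Real

theorem integral_inv_sin_sq_le {δ : ℝ} (hδ₀ : 0 < δ) (hδ : δ ≤ π / 2) :
    ∫ θ in δ..(π - δ), (sin θ ^ 2)⁻¹ ≤ 2 * (sin δ)⁻¹ := by
  have hsin {θ : ℝ} (hθ : θ ∈ Set.uIcc δ (π - δ)) : 0 < sin θ := by
    rw [Set.uIcc_of_le (by linarith)] at hθ
    exact sin_pos_of_pos_of_lt_pi (by linarith [hθ.1]) (by linarith [hθ.2])
  have hderiv (θ : ℝ) (hθ : θ ∈ Set.uIcc δ (π - δ)) :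
      HasDerivAt (fun θ => -(cos θ / sin θ)) ((sin θ ^ 2)⁻¹) θ := by
    refine ((hasDerivAt_cos θ).div (hasDerivAt_sin θ) (hsin hθ).ne').neg.congr_deriv ?_
    have := (hsin hθ).ne'
    field_simp
    linear_combination sin_sq_add_cos_sq θ
  have hcont : ContinuousOn (fun θ => (sin θ ^ 2)⁻¹) (Set.uIcc δ (π - δ)) :=
    ContinuousOn.inv₀ (by fun_prop) fun θ hθ => (pow_pos (hsin hθ) 2).ne'
  have hcot : cos δ / sin δ ≤ (sin δ)⁻¹ := by
    rw [div_eq_mul_inv]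
    exact mul_le_of_le_one_left (inv_pos.2 (hsin Set.left_mem_uIcc)).le (cos_le_one δ)
  rw [intervalIntegral.integral_eq_sub_of_hasDerivAt hderiv hcont.intervalIntegrable, cos_pi_sub,
    sin_pi_sub, neg_div]
  linarith

/-- The function `f` and its derivative are bounded by `B` on `s`. -/
def IsC1BoundedOn (f : ℝ → ℝ) (s : Set ℝ) (B : ℝ) : Prop := ∀ θ ∈ s, |f θ| ≤ B ∧ |deriv f θ| ≤ B

section IsC1BoundedOn

variable {f g : ℝ → ℝ} {s : Set ℝ} {A B : ℝ}

theorem IsC1BoundedOn.mono (hf : IsC1BoundedOn f s A) (hAB : A ≤ B) : IsC1BoundedOn f s B :=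
  fun θ hθ => ⟨(hf θ hθ).1.trans hAB, (hf θ hθ).2.trans hAB⟩

theorem IsC1BoundedOn.add (hf : IsC1BoundedOn f s A) (hg : IsC1BoundedOn g s B)
    (hf' : Differentiable ℝ f) (hg' : Differentiable ℝ g) :
    IsC1BoundedOn (fun θ => f θ + g θ) s (A + B) := fun θ hθ => by
  rw [deriv_fun_add (hf' θ) (hg' θ)]
  exact ⟨(abs_add_le _ _).trans (add_le_add (hf θ hθ).1 (hg θ hθ).1),
    (abs_add_le _ _).trans (add_le_add (hf θ hθ).2 (hg θ hθ).2)⟩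

theorem IsC1BoundedOn.mul (hf : IsC1BoundedOn f s A) (hg : IsC1BoundedOn g s B)
    (hf' : Differentiable ℝ f) (hg' : Differentiable ℝ g) :
    IsC1BoundedOn (fun θ => f θ * g θ) s (2 * (A * B)) := fun θ hθ => by
  obtain ⟨hfA, hf'A⟩ := hf θ hθ
  obtain ⟨hgB, hg'B⟩ := hg θ hθ
  have hmul {a b : ℝ} (ha : |a| ≤ A) (hb : |b| ≤ B) : |a * b| ≤ A * B := by
    rw [abs_mul]
    exact mul_le_mul ha hb (abs_nonneg b) ((abs_nonneg a).trans ha)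
  have hAB : 0 ≤ A * B := (abs_nonneg _).trans (hmul hfA hgB)
  rw [deriv_fun_mul (hf' θ) (hg' θ), two_mul]
  exact ⟨(hmul hfA hgB).trans (le_add_of_nonneg_left hAB),
    (abs_add_le _ _).trans (add_le_add (hmul hf'A hgB) (hmul hfA hg'B))⟩

theorem exists_isC1BoundedOn_Icc (hf : ContDiff ℝ 1 f) (a b : ℝ) :
    ∃ B, 0 ≤ B ∧ IsC1BoundedOn f (Set.Icc a b) B := by
  obtain ⟨B, hB⟩ := isCompact_Icc.exists_bound_of_continuousOn (s := Set.Icc a b)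
    (hf.continuous.prodMk (hf.continuous_deriv le_rfl)).continuousOn
  exact ⟨max B 0, le_max_right _ _, fun θ hθ =>
    ⟨(norm_fst_le _).trans ((hB θ hθ).trans (le_max_left _ _)),
      (norm_snd_le _).trans ((hB θ hθ).trans (le_max_left _ _))⟩⟩

theorem isC1BoundedOn_deriv_mul (hf : IsC1BoundedOn f s A) (hf' : IsC1BoundedOn (deriv f) s A)
    (hg : IsC1BoundedOn g s B) (hg' : IsC1BoundedOn (deriv g) s B) (hfC : ContDiff ℝ 2 f)
    (hgC : ContDiff ℝ 2 g) :
    IsC1BoundedOn (deriv fun θ => f θ * g θ) s (4 * (A * B)) := by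
  have hfd := hfC.differentiable two_ne_zero
  have hgd := hgC.differentiable two_ne_zero
  have hfd' : Differentiable ℝ (deriv f) := hfC.deriv'.differentiable one_ne_zero
  have hgd' : Differentiable ℝ (deriv g) := hgC.deriv'.differentiable one_ne_zero
  have hderiv : (deriv fun θ => f θ * g θ) = fun θ => deriv f θ * g θ + f θ * deriv g θ :=
    funext fun θ => deriv_fun_mul (hfd θ) (hgd θ)
  rw [hderiv]
  exact ((hf'.mul hg hfd' hgd).add (hf.mul hg' hfd hgd') (hfd'.mul hgd) (hfd.mul hgd')).mono
    (by linarith)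

end IsC1BoundedOn

variable {ψ : ℝ → ℝ} {t : ℝ}

theorem norm_exp_I_mul_ofReal_mul_ofReal (t x : ℝ) : ‖Complex.exp (Complex.I * t * x)‖ = 1 := by
  rw [mul_assoc, ← Complex.ofReal_mul, Complex.norm_exp_I_mul_ofReal]

theorem hasDerivAt_inv_I_mul_exp_phase {x m : ℝ} (hψ : HasDerivAt ψ m x) (ht : t ≠ 0) :
    HasDerivAt (fun θ => (Complex.I * t)⁻¹ * Complex.exp (Complex.I * t * ψ θ))
      (m • Complex.exp (Complex.I * t * ψ x)) x := by
  refine ((hψ.ofReal_comp.const_mul (Complex.I * (t : ℂ))).cexp.const_mul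
    (Complex.I * (t : ℂ))⁻¹).congr_deriv ?_
  have : (t : ℂ) ≠ 0 := Complex.ofReal_ne_zero.2 ht
  rw [Complex.real_smul]
  field_simp

theorem norm_integral_deriv_phase_mul_smul_exp_le {a b : ℝ} {v v' : ℝ → ℝ} (hψ : ContDiff ℝ 1 ψ)
    (hv : ∀ θ ∈ Set.uIcc a b, HasDerivAt v (v' θ) θ) (hv' : ContinuousOn v' (Set.uIcc a b))
    (ht : t ≠ 0) :
    ‖∫ θ in a..b, (v θ * deriv ψ θ) • Complex.exp (Complex.I * t * ψ θ)‖ ≤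
      |t|⁻¹ * (|v b| + |v a| + ‖∫ θ in a..b, v' θ • Complex.exp (Complex.I * t * ψ θ)‖) := by
  have : Continuous (deriv ψ) := hψ.continuous_deriv le_rfl
  have hψc : Continuous ψ := hψ.continuous
  have hcont : Continuous fun θ => deriv ψ θ • Complex.exp (Complex.I * t * ψ θ) := by fun_prop
  have hinv : ‖(Complex.I * t : ℂ)⁻¹‖ = |t|⁻¹ := by
    rw [norm_inv, norm_mul, Complex.norm_I, one_mul, Complex.norm_real, norm_eq_abs]
  have hend (r x : ℝ) : ‖r • Complex.exp (Complex.I * t * ψ x)‖ = |r| := by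
    rw [norm_smul, norm_exp_I_mul_ofReal_mul_ofReal, mul_one, norm_eq_abs]
  simp only [mul_smul]
  rw [intervalIntegral.integral_smul_deriv_eq_deriv_smul hv
    (fun θ _ => hasDerivAt_inv_I_mul_exp_phase
      (hψ.differentiable one_ne_zero θ).hasDerivAt ht)
    hv'.intervalIntegrable (hcont.intervalIntegrable a b)]
  calc _ ≤ _ := (norm_sub_le _ _).trans (add_le_add_left (norm_sub_le _ _) _)
    _ = _ := by
      simp only [← mul_smul_comm, intervalIntegral.integral_const_mul, norm_mul, hinv, hend]
      ring

theorem norm_integral_smul_exp_le {a b : ℝ} (hab : a ≤ b) {u w : ℝ → ℝ} (ψ : ℝ → ℝ) (t : ℝ)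
    (hu : ∀ θ ∈ Set.Icc a b, |u θ| ≤ w θ) (hw : ContinuousOn w (Set.Icc a b)) :
    ‖∫ θ in a..b, u θ • Complex.exp (Complex.I * t * ψ θ)‖ ≤ ∫ θ in a..b, w θ := by
  refine intervalIntegral.norm_integral_le_of_norm_le hab
    (Filter.Eventually.of_forall fun θ hθ => ?_) (hw.intervalIntegrable_of_Icc hab)
  rw [norm_smul, norm_exp_I_mul_ofReal_mul_ofReal, mul_one]
  exact hu θ (Set.Ioc_subset_Icc_self hθ)

theorem abs_mul_sin_sub_mul_cos_le {a b M : ℝ} (ha : |a| ≤ M) (hb : |b| ≤ M) (θ : ℝ) :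
    |b * sin θ - a * cos θ| ≤ 2 * M := calc
  |b * sin θ - a * cos θ| ≤ |b| * |sin θ| + |a| * |cos θ| := by
    rw [← abs_mul, ← abs_mul]
    exact abs_sub _ _
  _ ≤ M * 1 + M * 1 := by
    have hM := (abs_nonneg a).trans ha
    gcongr
    exacts [abs_sin_le_one θ, abs_cos_le_one θ]
  _ = 2 * M := by ring

theorem norm_integral_div_sin_mul_deriv_phase_smul_exp_le {h : ℝ → ℝ} {M δ : ℝ}
    (hψ : ContDiff ℝ 1 ψ) (hh : ContDiff ℝ 1 h)
    (hM : IsC1BoundedOn h (Set.Icc 0 π) M) (ht : t ≠ 0) (hδ₀ : 0 < δ)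
    (hδ : δ ≤ π / 2) :
    ‖∫ θ in δ..(π - δ), (h θ / sin θ * deriv ψ θ) • Complex.exp (Complex.I * t * ψ θ)‖ ≤
      |t|⁻¹ * (6 * M * (sin δ)⁻¹) := by
  have hle : δ ≤ π - δ := by linarith
  have hsub : Set.Icc δ (π - δ) ⊆ Set.Icc 0 π := Set.Icc_subset_Icc hδ₀.le (by linarith)
  have hsin {θ : ℝ} (hθ : θ ∈ Set.Icc δ (π - δ)) : 0 < sin θ :=
    sin_pos_of_pos_of_lt_pi (by linarith [hθ.1]) (by linarith [hθ.2])
  set v' : ℝ → ℝ := fun θ => (deriv h θ * sin θ - h θ * cos θ) / sin θ ^ 2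
  have hv (θ : ℝ) (hθ : θ ∈ Set.Icc δ (π - δ)) :
      HasDerivAt (fun θ => h θ / sin θ) (v' θ) θ :=
    (hh.differentiable one_ne_zero θ).hasDerivAt.div (hasDerivAt_sin θ) (hsin hθ).ne'
  have hv'c : ContinuousOn v' (Set.Icc δ (π - δ)) := by
    have := hh.continuous
    have := hh.continuous_deriv le_rfl
    exact ContinuousOn.div (by fun_prop) (by fun_prop) fun θ hθ => (pow_pos (hsin hθ) 2).ne'
  have hend {θ : ℝ} (hθ : θ ∈ Set.Icc δ (π - δ)) : |h θ / sin θ| ≤ M * (sin θ)⁻¹ := by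
    rw [abs_div, abs_of_pos (hsin hθ), div_eq_mul_inv]
    exact mul_le_mul_of_nonneg_right (hM θ (hsub hθ)).1 (inv_pos.2 (hsin hθ)).le
  have hv'M (θ : ℝ) (hθ : θ ∈ Set.Icc δ (π - δ)) : |v' θ| ≤ 2 * M * (sin θ ^ 2)⁻¹ := by
    have hM := hM θ (hsub hθ)
    rw [abs_div, abs_of_pos (pow_pos (hsin hθ) 2), div_eq_mul_inv]
    gcongr
    exact abs_mul_sin_sub_mul_cos_le hM.1 hM.2 θ
  have hM0 : 0 ≤ M := (abs_nonneg _).trans (hM 0 ⟨le_rfl, pi_pos.le⟩).1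
  have hinterior := (norm_integral_smul_exp_le hle ψ t hv'M
    ((ContinuousOn.inv₀ (by fun_prop) fun θ hθ => (pow_pos (hsin hθ) 2).ne').const_mul _)).trans_eq
      (intervalIntegral.integral_const_mul _ _)
  have hcot := mul_le_mul_of_nonneg_left (integral_inv_sin_sq_le hδ₀ hδ)
    (mul_nonneg zero_le_two hM0)
  have hright := hend (Set.right_mem_Icc.2 hle)
  refine (norm_integral_deriv_phase_mul_smul_exp_le hψ (by rwa [Set.uIcc_of_le hle])
    (by rwa [Set.uIcc_of_le hle]) ht).trans (mul_le_mul_of_nonneg_left ?_ (by positivity))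
  rw [sin_pi_sub] at hright ⊢
  linarith [hend (Set.left_mem_Icc.2 hle)]

theorem norm_integral_smul_exp_middle_le {h u : ℝ → ℝ} {M δ : ℝ} (hψ : ContDiff ℝ 1 ψ)
    (hh : ContDiff ℝ 1 h) (hrel : ∀ θ, deriv ψ θ * h θ = sin θ * u θ)
    (hM : IsC1BoundedOn h (Set.Icc 0 π) M) (ht : t ≠ 0) (hδ₀ : 0 < δ)
    (hδ : δ ≤ π / 2) :
    ‖∫ θ in δ..(π - δ), u θ • Complex.exp (Complex.I * t * ψ θ)‖ ≤ |t|⁻¹ * (3 * π * M * δ⁻¹) := by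
  have hM0 : 0 ≤ M := (abs_nonneg _).trans (hM 0 ⟨le_rfl, pi_pos.le⟩).1
  have hcongr : ∫ θ in δ..(π - δ), u θ • Complex.exp (Complex.I * t * ψ θ) =
      ∫ θ in δ..(π - δ), (h θ / sin θ * deriv ψ θ) • Complex.exp (Complex.I * t * ψ θ) := by
    refine intervalIntegral.integral_congr fun θ hθ => ?_
    rw [Set.uIcc_of_le (by linarith)] at hθ
    have hsin := sin_pos_of_pos_of_lt_pi (hδ₀.trans_le hθ.1) (by linarith [hθ.2])
    simp only [div_mul_eq_mul_div, mul_comm (h θ), hrel, mul_div_cancel_left₀ _ hsin.ne']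
  have hjordan : (sin δ)⁻¹ ≤ (2 / π * δ)⁻¹ :=
    inv_anti₀ (by positivity) (mul_le_sin hδ₀.le hδ)
  rw [hcongr]
  calc _ ≤ |t|⁻¹ * (6 * M * (sin δ)⁻¹) :=
        norm_integral_div_sin_mul_deriv_phase_smul_exp_le hψ hh hM ht hδ₀ hδ
    _ ≤ |t|⁻¹ * (6 * M * (2 / π * δ)⁻¹) := by gcongr
    _ = |t|⁻¹ * (3 * π * M * δ⁻¹) := by
        field_simp
        ring

/-- The neighbourhoods of radius `|t| ^ (-1 / 2)` of the critical points `0` and `π` of `ψ` are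
estimated trivially, the rest of the interval by one integration by parts. -/
theorem norm_integral_smul_exp_le_rpow_neg_half {h u : ℝ → ℝ} {M N : ℝ} (hψ : ContDiff ℝ 1 ψ)
    (hh : ContDiff ℝ 1 h) (hu : Continuous u) (hrel : ∀ θ, deriv ψ θ * h θ = sin θ * u θ)
    (hM : IsC1BoundedOn h (Set.Icc 0 π) M)
    (hN : ∀ θ ∈ Set.Icc 0 π, |u θ| ≤ N) (ht : 1 ≤ |t|) :
    ‖∫ θ in (0 : ℝ)..π, u θ • Complex.exp (Complex.I * t * ψ θ)‖ ≤
      (2 * N + 3 * π * M) * |t| ^ (-(1 / 2) : ℝ) := by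
  have hπ := pi_gt_three
  have ht₀ : 0 < |t| := one_pos.trans_le ht
  set δ : ℝ := |t| ^ (-(1 / 2) : ℝ) with hδ
  have hδ₀ : 0 < δ := by positivity
  have hδ₁ : δ ≤ 1 := rpow_le_one_of_one_le_of_nonpos ht (by norm_num)
  have hδsq : |t|⁻¹ = δ * δ := by
    rw [hδ, ← rpow_add ht₀, ← rpow_neg_one]
    norm_num
  have hcont : Continuous fun θ => u θ • Complex.exp (Complex.I * t * ψ θ) := by
    have := hψ.continuous
    fun_prop
  have hint (a b : ℝ) := hcont.intervalIntegrable (μ := volume) a b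
  have hend {a b : ℝ} (ha : 0 ≤ a) (hab : a ≤ b) (hb : b ≤ π) :
      ‖∫ θ in a..b, u θ • Complex.exp (Complex.I * t * ψ θ)‖ ≤ N * (b - a) := by
    refine (norm_integral_smul_exp_le hab ψ t
      (fun θ hθ => hN θ ⟨ha.trans hθ.1, hθ.2.trans hb⟩) continuousOn_const).trans_eq ?_
    rw [intervalIntegral.integral_const, smul_eq_mul, mul_comm]
  have hmiddle := norm_integral_smul_exp_middle_le hψ hh hrel hM (abs_pos.1 ht₀) hδ₀
    (by linarith)
  rw [← intervalIntegral.integral_add_adjacent_intervals (hint 0 δ) (hint δ π),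
    ← intervalIntegral.integral_add_adjacent_intervals (hint δ (π - δ)) (hint (π - δ) π)]
  calc _ ≤ N * (δ - 0) + (|t|⁻¹ * (3 * π * M * δ⁻¹) + N * (π - (π - δ))) :=
        norm_add_le_of_le (hend le_rfl hδ₀.le (by linarith))
          (norm_add_le_of_le hmiddle (hend (by linarith) (by linarith) le_rfl))
    _ = (2 * N + 3 * π * M) * δ := by
        rw [hδsq]
        field_simp
        ring

/-- Two integrations by parts: the first has no boundary terms because `k` vanishes at the
endpoints, and the amplitude `deriv k` it leaves is covered by the previous bound. -/
theorem norm_integral_mul_deriv_phase_smul_exp_le {k g : ℝ → ℝ} {M N : ℝ} (hψ : ContDiff ℝ 1 ψ)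
    (hg : ContDiff ℝ 1 g) (hk : ContDiff ℝ 2 k) (hψg : ∀ θ, deriv ψ θ * g θ = sin θ)
    (hk₀ : k 0 = 0) (hkπ : k π = 0) (hN : ∀ θ ∈ Set.Icc 0 π, |deriv k θ| ≤ N)
    (hM : IsC1BoundedOn (fun θ => g θ * deriv k θ) (Set.Icc 0 π) M) (ht : 1 ≤ |t|) :
    ‖∫ θ in (0 : ℝ)..π, (k θ * deriv ψ θ) • Complex.exp (Complex.I * t * ψ θ)‖ ≤
      (2 * N + 3 * π * M) * |t| ^ (-(3 / 2) : ℝ) := by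
  have ht₀ : 0 < |t| := one_pos.trans_le ht
  have hk' : ContDiff ℝ 1 (deriv k) := hk.deriv'
  have hhalf := norm_integral_smul_exp_le_rpow_neg_half hψ (hg.mul hk') hk'.continuous
    (fun θ => by rw [← mul_assoc, hψg]) hM hN ht
  have hparts := norm_integral_deriv_phase_mul_smul_exp_le hψ
    (fun θ _ => (hk.differentiable two_ne_zero θ).hasDerivAt)
    (hk'.continuous.continuousOn (s := Set.uIcc 0 π)) (abs_pos.1 ht₀)
  rw [hk₀, hkπ, abs_zero, add_zero, zero_add] at hparts
  calc _ ≤ |t|⁻¹ * ((2 * N + 3 * π * M) * |t| ^ (-(1 / 2) : ℝ)) :=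
        hparts.trans (mul_le_mul_of_nonneg_left hhalf (by positivity))
    _ = (2 * N + 3 * π * M) * |t| ^ (-(3 / 2) : ℝ) := by
        rw [mul_left_comm, ← rpow_neg_one, ← rpow_add ht₀]
        norm_num

theorem exists_norm_integral_sin_mul_smul_exp_le {g W : ℝ → ℝ} (hψ : ContDiff ℝ 1 ψ)
    (hg : ContDiff ℝ 2 g) (hW : ContDiff ℝ 2 W) (hψg : ∀ θ, deriv ψ θ * g θ = sin θ) :
    ∃ C, 0 < C ∧ ∀ {S : ℝ → ℝ} {N t : ℝ}, ContDiff ℝ 2 S → S 0 = 0 → S π = 0 →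
      IsC1BoundedOn S (Set.Icc 0 π) N → IsC1BoundedOn (deriv S) (Set.Icc 0 π) N → 1 ≤ |t| →
      ‖∫ θ in (0 : ℝ)..π, (sin θ * (S θ * W θ)) • Complex.exp (Complex.I * t * ψ θ)‖ ≤
        C * N * |t| ^ (-(3 / 2) : ℝ) := by
  have hA : ContDiff ℝ 2 fun θ => g θ * W θ := hg.mul hW
  obtain ⟨B₀, hB₀, hgB⟩ := exists_isC1BoundedOn_Icc (hg.of_le one_le_two) 0 π
  obtain ⟨B₁, hB₁, hAB₁⟩ := exists_isC1BoundedOn_Icc (hA.of_le one_le_two) 0 π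
  obtain ⟨B₂, _, hAB₂⟩ := exists_isC1BoundedOn_Icc hA.deriv' 0 π
  set B := max B₁ B₂
  refine ⟨8 * B + 24 * π * B₀ * B + 1, by positivity, fun {S N t} hS hS₀ hSπ hN hN' ht => ?_⟩
  have hN0 : 0 ≤ N := (abs_nonneg _).trans (hN 0 ⟨le_rfl, pi_pos.le⟩).1
  have hk : ContDiff ℝ 2 fun θ => g θ * W θ * S θ := hA.mul hS
  have hk'B := isC1BoundedOn_deriv_mul (hAB₁.mono (le_max_left B₁ B₂))
    (hAB₂.mono (le_max_right B₁ B₂)) hN hN' hA hS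
  have hbound := norm_integral_mul_deriv_phase_smul_exp_le hψ (hg.of_le one_le_two) hk hψg
    (by simp only [hS₀, mul_zero]) (by simp only [hSπ, mul_zero]) (fun θ hθ => (hk'B θ hθ).1)
    (hgB.mul hk'B (hg.differentiable two_ne_zero) (hk.deriv'.differentiable one_ne_zero)) ht
  have hcongr (θ : ℝ) : sin θ * (S θ * W θ) = g θ * W θ * S θ * deriv ψ θ := by
    rw [← hψg]
    ring
  simp only [hcongr]
  refine hbound.trans (mul_le_mul_of_nonneg_right ?_ (by positivity))
  linarith

end OscillatoryIntegrals

section DispersiveKernel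

open Real

theorem sphericalWave_zero (Q d : ℕ) : sphericalWave Q d 0 = 0 := by
  simp [sphericalWave]

theorem sphericalWave_pi (Q d : ℕ) : sphericalWave Q d π = 0 := by
  have h₁ : sin (((d : ℝ) + 1) * π) = 0 := by exact_mod_cast sin_nat_mul_pi (d + 1)
  have h₂ : sin (((d : ℝ) - 1) * π) = 0 := by exact_mod_cast sin_int_mul_pi (d - 1)
  rw [sphericalWave, h₁, h₂, mul_zero, sub_zero]

theorem deriv_sphericalWave (Q d : ℕ) :
    deriv (sphericalWave Q d) = fun θ =>
      (d + 1) * cos ((d + 1) * θ) - (Q : ℝ)⁻¹ * ((d - 1) * cos ((d - 1) * θ)) := by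
  have hsin (a θ : ℝ) : HasDerivAt (fun x => sin (a * x)) (a * cos (a * θ)) θ := by
    simpa [mul_comm] using ((hasDerivAt_id θ).const_mul a).sin
  exact funext fun θ => ((hsin _ θ).sub ((hsin _ θ).const_mul _)).deriv

theorem deriv_deriv_sphericalWave (Q d : ℕ) :
    deriv (deriv (sphericalWave Q d)) = fun θ =>
      -((d + 1) ^ 2 * sin ((d + 1) * θ) - (Q : ℝ)⁻¹ * ((d - 1) ^ 2 * sin ((d - 1) * θ))) := by
  have hcos (a θ : ℝ) : HasDerivAt (fun x => a * cos (a * x)) (-(a ^ 2 * sin (a * θ))) θ := by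
    have h := (((hasDerivAt_id' θ).const_mul a).cos).const_mul a
    exact h.congr_deriv (by ring)
  rw [deriv_sphericalWave]
  refine funext fun θ => (((hcos _ θ).sub ((hcos _ θ).const_mul _)).deriv).trans ?_
  ring

theorem isC1BoundedOn_sphericalWave (Q d : ℕ) (s : Set ℝ) :
    IsC1BoundedOn (sphericalWave Q d) s (2 * (d + 1) ^ 2) ∧
      IsC1BoundedOn (deriv (sphericalWave Q d)) s (2 * (d + 1) ^ 2) := by
  have : (0 : ℝ) ≤ d := d.cast_nonneg
  have h₀ : (1 : ℝ) ≤ (d + 1) ^ 2 := by nlinarith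
  have h₁ : |(d : ℝ) + 1| ≤ (d + 1) ^ 2 := by rw [abs_of_nonneg (by positivity)]; nlinarith
  have h₁' : |(d : ℝ) - 1| ≤ (d + 1) ^ 2 := abs_le.2 (by constructor <;> nlinarith)
  have h₂ : |((d : ℝ) + 1) ^ 2| ≤ ((d : ℝ) + 1) ^ 2 := (abs_of_nonneg (sq_nonneg _)).le
  have h₂' : |((d : ℝ) - 1) ^ 2| ≤ ((d : ℝ) + 1) ^ 2 := by
    rw [abs_of_nonneg (by positivity)]
    nlinarith
  have hderiv (θ : ℝ) : |deriv (sphericalWave Q d) θ| ≤ 2 * (d + 1) ^ 2 := by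
    rw [deriv_sphericalWave]
    exact abs_sub_inv_natCast_mul_le Q h₁ h₁' (abs_cos_le_one _) (abs_cos_le_one _)
  refine ⟨fun θ _ => ⟨?_, hderiv θ⟩, fun θ _ => ⟨hderiv θ, ?_⟩⟩
  · exact (abs_sphericalWave_le Q d θ).trans (by linarith)
  · rw [deriv_deriv_sphericalWave, abs_neg]
    exact abs_sub_inv_natCast_mul_le Q h₂ h₂' (abs_sin_le_one _) (abs_sin_le_one _)

/-- A phase function on the spectrum of a homogeneous tree for which the propagator `e^{itφ(-Δ)}`
disperses: `φ` is of class `C³` without critical points. -/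
structure IsDispersivePhase (Q : ℕ) (φ : ℝ → ℝ) : Prop where
  contDiffAt : ∀ s ∈ treeSpectrum Q, ContDiffAt ℝ 3 φ s
  deriv_ne_zero : ∀ s ∈ treeSpectrum Q, deriv φ s ≠ 0

variable {Q : ℕ} {φ : ℝ → ℝ}

theorem isDispersivePhase_rpow (hQ : 2 ≤ Q) {a : ℝ} (ha : a ≠ 0) :
    IsDispersivePhase Q fun s => s ^ a where
  contDiffAt _ hs := contDiffAt_rpow_const_of_ne (pos_of_mem_treeSpectrum hQ hs).ne'
  deriv_ne_zero s hs := by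
    have hs0 := pos_of_mem_treeSpectrum hQ hs
    rw [Real.deriv_rpow_const]
    exact mul_ne_zero ha (rpow_pos_of_pos hs0 _).ne'

namespace IsDispersivePhase

theorem continuousOn_exp (hφ : IsDispersivePhase Q φ) (t : ℝ) :
    ContinuousOn (fun s => Complex.exp (Complex.I * t * φ s)) (treeSpectrum Q) := fun s hs =>
  (((Complex.continuous_ofReal.continuousAt.comp
    (hφ.contDiffAt s hs).continuousAt).const_mul _).cexp).continuousWithinAt

theorem contDiff_comp_laplaceSymbol (hφ : IsDispersivePhase Q φ) :
    ContDiff ℝ 3 (φ ∘ laplaceSymbol Q) :=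
  contDiff_iff_contDiffAt.2 fun θ =>
    (hφ.contDiffAt _ (laplaceSymbol_mem_treeSpectrum Q θ)).comp θ
      (contDiff_laplaceSymbol Q).contDiffAt

theorem deriv_comp_laplaceSymbol (hφ : IsDispersivePhase Q φ) (θ : ℝ) :
    deriv (φ ∘ laplaceSymbol Q) θ = walkRadius Q * deriv φ (laplaceSymbol Q θ) * sin θ := by
  have hdiff := (hφ.contDiffAt _ (laplaceSymbol_mem_treeSpectrum Q θ)).differentiableAt (by simp)
  rw [deriv_comp θ hdiff ((contDiff_laplaceSymbol Q (n := 1)).differentiable (by simp) θ),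
    deriv_laplaceSymbol]
  ring

theorem walkRadius_mul_deriv_ne_zero (hφ : IsDispersivePhase Q φ) (hQ : 0 < Q) (θ : ℝ) :
    walkRadius Q * deriv φ (laplaceSymbol Q θ) ≠ 0 :=
  mul_ne_zero (walkRadius_pos hQ).ne' (hφ.deriv_ne_zero _ (laplaceSymbol_mem_treeSpectrum Q θ))

theorem contDiff_inv_walkRadius_mul_deriv (hφ : IsDispersivePhase Q φ) (hQ : 0 < Q) :
    ContDiff ℝ 2 fun θ => (walkRadius Q * deriv φ (laplaceSymbol Q θ))⁻¹ := by
  refine contDiff_iff_contDiffAt.2 fun θ =>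
    (contDiffAt_const.mul ?_).inv (hφ.walkRadius_mul_deriv_ne_zero hQ θ)
  have hderiv : ContDiffAt ℝ 2 (deriv φ) (laplaceSymbol Q θ) :=
    (hφ.contDiffAt _ (laplaceSymbol_mem_treeSpectrum Q θ)).derivWithin (by norm_num)
  exact hderiv.comp θ (contDiff_laplaceSymbol Q).contDiffAt

theorem exists_norm_treeKernel_exp_le_of_one_le_abs (hφ : IsDispersivePhase Q φ) (hQ : 2 ≤ Q) :
    ∃ C : ℝ, 0 < C ∧ ∀ (t : ℝ) (d : ℕ), 1 ≤ |t| →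
      ‖treeKernel Q (fun s => Complex.exp (Complex.I * t * φ s)) d‖ ≤
        C * |t| ^ (-(3 / 2) : ℝ) * ((d + 1) ^ 2 * (√Q)⁻¹ ^ d) := by
  have hQ0 : 0 < Q := by omega
  obtain ⟨C, hC, hbound⟩ := exists_norm_integral_sin_mul_smul_exp_le
    (hφ.contDiff_comp_laplaceSymbol.of_le (by norm_num))
    (hφ.contDiff_inv_walkRadius_mul_deriv hQ0) (contDiff_plancherelWeight hQ) fun θ => by
      rw [hφ.deriv_comp_laplaceSymbol, mul_right_comm,
        mul_inv_cancel₀ (hφ.walkRadius_mul_deriv_ne_zero hQ0 θ), one_mul]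
  refine ⟨2 / π * C * 2, by positivity, fun t d ht => ?_⟩
  obtain ⟨hS, hS'⟩ := isC1BoundedOn_sphericalWave Q d (Set.Icc 0 π)
  have hosc := hbound (contDiff_sphericalWave Q d) (sphericalWave_zero Q d) (sphericalWave_pi Q d)
    hS hS' ht
  have hfactor : treeKernel Q (fun s => Complex.exp (Complex.I * t * φ s)) d =
      (2 / π * (√Q)⁻¹ ^ d) • ∫ θ in (0 : ℝ)..π,
        (sin θ * (sphericalWave Q d θ * plancherelWeight Q θ)) •
          Complex.exp (Complex.I * t * (φ ∘ laplaceSymbol Q) θ) := by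
    rw [treeKernel, mul_smul, ← intervalIntegral.integral_smul ((√Q : ℝ)⁻¹ ^ d)]
    simp only [smul_smul, treeDensity, mul_left_comm (sin _), Function.comp_apply]
  rw [hfactor, norm_smul, norm_of_nonneg (by positivity)]
  calc _ ≤ 2 / π * (√Q)⁻¹ ^ d * (C * (2 * (d + 1) ^ 2) * |t| ^ (-(3 / 2) : ℝ)) := by gcongr
    _ = _ := by ring

end IsDispersivePhase

theorem rpow_neg_three_halves_le {t : ℝ} (ht : 1 ≤ |t|) :
    |t| ^ (-(3 / 2) : ℝ) ≤ 4 * (1 + |t|) ^ (-(3 / 2) : ℝ) := by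
  have htwo : (4 : ℝ)⁻¹ ≤ 2 ^ (-(3 / 2) : ℝ) := by
    rw [show (4 : ℝ)⁻¹ = 2 ^ (-2 : ℝ) by norm_num [rpow_neg]]
    exact rpow_le_rpow_of_exponent_le one_le_two (by norm_num)
  have hdouble : (2 * |t|) ^ (-(3 / 2) : ℝ) ≤ (1 + |t|) ^ (-(3 / 2) : ℝ) :=
    rpow_le_rpow_of_nonpos (by positivity) (by linarith) (by norm_num)
  rw [mul_rpow two_pos.le (abs_nonneg t)] at hdouble
  nlinarith [rpow_nonneg (abs_nonneg t) (-(3 / 2) : ℝ)]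

theorem one_le_four_mul_rpow_neg_three_halves {t : ℝ} (ht : |t| ≤ 1) :
    1 ≤ 4 * (1 + |t|) ^ (-(3 / 2) : ℝ) := by
  have hone := rpow_neg_three_halves_le (abs_one (α := ℝ)).ge
  rw [abs_one, one_rpow] at hone
  refine hone.trans (mul_le_mul_of_nonneg_left ?_ (by norm_num))
  exact rpow_le_rpow_of_nonpos (by positivity) (by linarith) (by norm_num)

theorem IsDispersivePhase.exists_norm_treeKernel_exp_le (hφ : IsDispersivePhase Q φ)
    (hQ : 2 ≤ Q) :
    ∃ C : ℝ, 0 < C ∧ ∀ (t : ℝ) (d : ℕ),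
      ‖treeKernel Q (fun s => Complex.exp (Complex.I * t * φ s)) d‖ ≤
        C * (1 + |t|) ^ (-(3 / 2) : ℝ) * ((d + 1) ^ 2 * (√Q)⁻¹ ^ d) := by
  obtain ⟨C, hC, hlarge⟩ := hφ.exists_norm_treeKernel_exp_le_of_one_le_abs hQ
  have hq := sub_pos.2 (inv_natCast_lt_one hQ)
  set C₀ := 4 * ((1 - (Q : ℝ)⁻¹) ^ 2)⁻¹
  have hC₀ : 0 < C₀ := by positivity
  refine ⟨4 * (C₀ + C), by positivity, fun t d => ?_⟩
  rcases le_total |t| 1 with ht | ht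
  · have hd : (1 : ℝ) ≤ (d + 1) ^ 2 := one_le_pow₀ (by simp)
    have hsmall := norm_treeKernel_le hQ (F := fun s => Complex.exp (Complex.I * t * φ s))
      (fun s _ => (norm_exp_I_mul_ofReal_mul_ofReal t (φ s)).le) d
    calc _ ≤ C₀ * 1 * (1 * (√Q)⁻¹ ^ d) := by simpa only [one_mul] using hsmall
      _ ≤ (C₀ + C) * (4 * (1 + |t|) ^ (-(3 / 2) : ℝ)) * ((d + 1) ^ 2 * (√Q)⁻¹ ^ d) := by
        gcongr
        · exact le_add_of_nonneg_right hC.le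
        · exact one_le_four_mul_rpow_neg_three_halves ht
      _ = _ := by ring
  · calc _ ≤ C * |t| ^ (-(3 / 2) : ℝ) * ((d + 1) ^ 2 * (√Q)⁻¹ ^ d) := hlarge t d ht
      _ ≤ (C₀ + C) * (4 * (1 + |t|) ^ (-(3 / 2) : ℝ)) * ((d + 1) ^ 2 * (√Q)⁻¹ ^ d) := by
        gcongr
        · exact le_add_of_nonneg_left hC₀.le
        · exact rpow_neg_three_halves_le ht
      _ = _ := by ring

theorem exists_sq_mul_pow_le {ρ : ℝ} (hρ₀ : 0 ≤ ρ) (hρ₁ : ρ < 1) :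
    ∃ C : ℝ, 0 < C ∧ ∀ d : ℕ, ((d : ℝ) + 1) ^ 2 * ρ ^ d ≤ C := by
  obtain ⟨K, hK⟩ := (tendsto_pow_const_mul_const_pow_of_abs_lt_one 2
    (by rwa [abs_of_nonneg hρ₀] : |ρ| < 1)).bddAbove_range
  have hsq : ∀ d : ℕ, (d : ℝ) ^ 2 * ρ ^ d ≤ K := fun d => hK ⟨d, rfl⟩
  have hK₀ : 0 ≤ K := by simpa using hsq 0
  refine ⟨2 * K + 2, by positivity, fun d => ?_⟩
  calc ((d : ℝ) + 1) ^ 2 * ρ ^ d ≤ 2 * ((d : ℝ) ^ 2 + 1 ^ 2) * ρ ^ d := by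
        gcongr
        exact add_sq_le
    _ = 2 * ((d : ℝ) ^ 2 * ρ ^ d) + 2 * ρ ^ d := by ring
    _ ≤ 2 * K + 2 * 1 := by
      gcongr
      · exact hsq d
      · exact pow_le_one₀ hρ₀ hρ₁.le
    _ = 2 * K + 2 := by rw [mul_one]

theorem exists_sq_mul_inv_pow_le {b s : ℝ} (hb : 1 < b) (hs₀ : 0 < s) (hs₁ : s < 1) :
    ∃ r, b < r ∧ ∃ C : ℝ, 0 < C ∧
      ∀ d : ℕ, ((d : ℝ) + 1) ^ 2 * b⁻¹ ^ d ≤ C * (r⁻¹ ^ d) ^ s := by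
  have hb₀ : 0 < b := by linarith
  have hexp : 1 < (1 + s⁻¹) / 2 := by linarith [(one_lt_inv₀ hs₀).2 hs₁]
  obtain ⟨r, hr⟩ : ∃ r, r = b ^ ((1 + s⁻¹) / 2) := ⟨_, rfl⟩
  have hr₀ : 0 < r := hr ▸ rpow_pos_of_pos hb₀ _
  have hrs : r ^ s < b := by
    rw [hr, ← rpow_mul hb₀.le]
    have : (1 + s⁻¹) / 2 * s < 1 := by
      field_simp
      linarith
    simpa using rpow_lt_rpow_of_exponent_lt hb this
  obtain ⟨C, hC₀, hC⟩ := exists_sq_mul_pow_le (ρ := r ^ s / b) (by positivity)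
    ((div_lt_one hb₀).2 hrs)
  refine ⟨r, by simpa [hr] using rpow_lt_rpow_of_exponent_lt hb hexp, C, hC₀, fun d => ?_⟩
  have hcomm : (r⁻¹ ^ d) ^ s = (r ^ s)⁻¹ ^ d := by
    rw [← rpow_pow_comm (by positivity), inv_rpow hr₀.le]
  calc ((d : ℝ) + 1) ^ 2 * b⁻¹ ^ d = ((d : ℝ) + 1) ^ 2 * (r ^ s / b) ^ d * (r ^ s)⁻¹ ^ d := by
        rw [mul_assoc, ← mul_pow]
        congr 2
        field_simp
    _ ≤ C * (r ^ s)⁻¹ ^ d := by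
      gcongr
      exact hC d
    _ = C * (r⁻¹ ^ d) ^ s := by rw [hcomm]

end DispersiveKernel

section DispersiveEstimate

variable {V : Type*} {G : SimpleGraph V} [∀ v, Fintype (G.neighborSet v)] {Q : ℕ}
  {Δ : lp (fun _ : V => ℂ) 2 →L[ℂ] lp (fun _ : V => ℂ) 2} {φ : ℝ → ℝ}

namespace IsDispersivePhase

theorem exists_enorm_cfc_exp_apply_single_le [DecidableEq V] (hφ : IsDispersivePhase Q φ)
    (hQ : 2 ≤ Q) (hG : G.IsTree) (hdeg : ∀ v, G.degree v = Q + 1)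
    (hΔ : IsCombinatorialLaplacian G Q Δ) (hsa : IsSelfAdjoint Δ) {a : ℝ} (ha₀ : 0 < a)
    (ha₁ : a < 1) :
    ∃ r, √Q < r ∧ ∃ C : ℝ, 0 < C ∧ ∀ (t : ℝ) (x y : V),
      ‖cfc (fun z : ℂ => Complex.exp (Complex.I * t * φ z.re)) (-Δ) (lp.single 2 y 1) x‖ₑ ≤
        ENNReal.ofReal (C * (1 + |t|) ^ (-(3 / 2) : ℝ)) *
          ENNReal.ofReal (r⁻¹ ^ G.dist x y) ^ a := by
  have hb : 1 < √(Q : ℝ) := Real.lt_sqrt_of_sq_lt (by rw [one_pow]; exact_mod_cast hQ)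
  obtain ⟨r, hr, C₂, hC₂, hdecay⟩ := exists_sq_mul_inv_pow_le hb ha₀ ha₁
  obtain ⟨C₁, hC₁, hkernel⟩ := hφ.exists_norm_treeKernel_exp_le hQ
  refine ⟨r, hr, C₁ * C₂, by positivity, fun t x y => ?_⟩
  have hr₀ : 0 < r := (zero_lt_one.trans hb).trans hr
  rw [cfc_neg_laplacian_apply_single hQ hG hdeg hΔ hsa (hφ.continuousOn_exp t),
    ENNReal.ofReal_rpow_of_nonneg (by positivity) ha₀.le, ← ENNReal.ofReal_mul (by positivity),
    ← ofReal_norm]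
  refine ENNReal.ofReal_le_ofReal ?_
  calc _ ≤ C₁ * (1 + |t|) ^ (-(3 / 2) : ℝ) *
        (((G.dist x y : ℝ) + 1) ^ 2 * (√Q)⁻¹ ^ G.dist x y) := hkernel t _
    _ ≤ C₁ * (1 + |t|) ^ (-(3 / 2) : ℝ) * (C₂ * (r⁻¹ ^ G.dist x y) ^ a) :=
      mul_le_mul_of_nonneg_left (hdecay _) (by positivity)
    _ = _ := by ring

theorem exists_eLpNorm_cfc_exp_le_conjExponent [MeasurableSpace V] [MeasurableSingletonClass V]
    (hφ : IsDispersivePhase Q φ) (hQ : 2 ≤ Q) (hG : G.IsTree) (hdeg : ∀ v, G.degree v = Q + 1)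
    (hΔ : IsCombinatorialLaplacian G Q Δ) (hsa : IsSelfAdjoint Δ) {p : ℝ} (hp : 2 < p) :
    ∃ C : ℝ, 0 < C ∧ ∀ (t : ℝ) (f : lp (fun _ : V => ℂ) 2),
      eLpNorm (fun x => cfc (fun z : ℂ => Complex.exp (Complex.I * t * φ z.re)) (-Δ) f x)
          (ENNReal.ofReal p) Measure.count ≤
        ENNReal.ofReal (C * (1 + |t|) ^ (-(3 / 2) : ℝ)) *
          eLpNorm (fun x => f x) (ENNReal.ofReal (p / (p - 1))) Measure.count := by
  classical
  have hp₀ : 0 < p := by linarith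
  obtain ⟨r, hr, C₁, hC₁, hsingle⟩ := hφ.exists_enorm_cfc_exp_apply_single_le hQ hG hdeg hΔ hsa
    (div_pos two_pos hp₀) ((div_lt_one hp₀).2 hp)
  obtain ⟨C₂, hC₂, hbounded⟩ :=
    exists_isSqBoundedKernel_inv_pow_dist (zero_lt_two.trans_le hQ) hG hdeg hr
  refine ⟨C₁ * C₂ ^ (1 / p), by positivity, fun t f => ?_⟩
  refine (hbounded.eLpNorm_count_le (f := fun x => f x)
    (c := ENNReal.ofReal (C₁ * (1 + |t|) ^ (-(3 / 2) : ℝ))) hp.le fun x => ?_).trans_eq ?_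
  · refine (enorm_apply_le_tsum _ f x).trans ?_
    rw [← ENNReal.tsum_mul_left]
    refine ENNReal.tsum_le_tsum fun y => ?_
    rw [← mul_assoc]
    gcongr
    exact hsingle t x y
  · rw [ENNReal.ofReal_rpow_of_pos hC₂, ← ENNReal.ofReal_mul (by positivity), mul_right_comm]

end IsDispersivePhase

theorem stmt18_dispersive_tree_general [MeasurableSpace V] [MeasurableSingletonClass V]
    (hφ : IsDispersivePhase Q φ) (hQ : 2 ≤ Q) (hG : G.IsTree) (hdeg : ∀ v, G.degree v = Q + 1)
    (hΔ : IsCombinatorialLaplacian G Q Δ) (hsa : IsSelfAdjoint Δ)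
    {q qt q' : ℝ≥0∞} (hq : 2 < q) (hqt : 2 < qt) (hq' : 1 / q + 1 / q' = 1) :
    ∃ C : ℝ, 0 < C ∧ ∀ (t : ℝ) (f : lp (fun _ : V => ℂ) 2),
      eLpNorm (fun x => cfc (fun z : ℂ => Complex.exp (Complex.I * t * φ z.re)) (-Δ) f x)
          qt Measure.count ≤
        ENNReal.ofReal (C * (1 + |t|) ^ (-(3 / 2) : ℝ)) *
          eLpNorm (fun x => f x) q' Measure.count := by
  obtain ⟨p, hp, hpqt, hpq'⟩ := exists_real_exponent_between hq hqt hq'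
  obtain ⟨C, hC, hbound⟩ :=
    hφ.exists_eLpNorm_cfc_exp_le_conjExponent hQ hG hdeg hΔ hsa hp
  have hp_ne : ENNReal.ofReal p ≠ 0 := (ENNReal.ofReal_pos.2 (by linarith)).ne'
  have hq'_ne : q' ≠ 0 := by
    rintro rfl
    simp at hq'
  exact ⟨C, hC, fun t f => (eLpNorm_count_antitone _ hp_ne hpqt).trans <| (hbound t f).trans <|
    mul_le_mul_right (eLpNorm_count_antitone _ hq'_ne hpq') _⟩

theorem cfc_exp_cpow_neg_laplacian (hQ : 2 ≤ Q) (hG : G.IsTree)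
    (hdeg : ∀ v, G.degree v = Q + 1) (hΔ : IsCombinatorialLaplacian G Q Δ) (hsa : IsSelfAdjoint Δ)
    (t a : ℝ) :
    cfc (fun z : ℂ => Complex.exp (Complex.I * t * z ^ (a : ℂ))) (-Δ) =
      cfc (fun z : ℂ => Complex.exp (Complex.I * t * (z.re ^ a : ℝ))) (-Δ) := by
  refine cfc_congr fun z hz => ?_
  obtain ⟨s, hs, rfl⟩ :=
    spectrum_neg_laplacian_subset (zero_lt_two.trans_le hQ) hG hdeg hΔ hsa hz
  simp only [Complex.ofReal_re, Complex.ofReal_cpow (pos_of_mem_treeSpectrum hQ hs).le]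

end DispersiveEstimate

theorem stmt18_dispersive_tree {V : Type*} [MeasurableSpace V] [DiscreteMeasurableSpace V]
    (Q : ℕ) (hQ : 2 ≤ Q)
    -- T is a homogeneous tree of degree Q+1, with vertex set V
    (G : SimpleGraph V) [∀ v, Fintype (G.neighborSet v)]
    (htree : G.IsTree) (hdeg : ∀ v : V, G.degree v = Q + 1)
    -- the combinatorial Laplacian, a bounded self-adjoint operator on ℓ²(T)
    (Δ : lp (fun _ : V => ℂ) 2 →L[ℂ] lp (fun _ : V => ℂ) 2)
    (hΔ : ∀ (f : lp (fun _ : V => ℂ) 2) (x : V),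
      Δ f x = ((Q : ℂ) + 1)⁻¹ * (∑ y ∈ G.neighborFinset x, f y) - f x)
    (hsa : IsSelfAdjoint Δ)
    (α : ℝ) (hα0 : 0 < α) (hα2 : α ≤ 2)
    (q qt q' : ℝ≥0∞) (hq : 2 < q) (hqt : 2 < qt) (hq' : 1 / q + 1 / q' = 1) :
    ∃ C : ℝ, 0 < C ∧ ∀ t : ℝ, ∀ f : lp (fun _ : V => ℂ) 2,
      -- f lies in ℓ^{q′}(T) (and in ℓ²(T) since q′ ≤ 2)
      eLpNorm (fun x : V => f x) q' Measure.count < ⊤ →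
      eLpNorm
          (fun x : V =>
            (cfc (fun z : ℂ => Complex.exp (Complex.I * t * z ^ (α / 2 : ℂ))) (-Δ)) f x)
          qt Measure.count
        ≤ ENNReal.ofReal (C * (1 + |t|) ^ (-(3 / 2) : ℝ)) *
            eLpNorm (fun x : V => f x) q' Measure.count := by
  obtain ⟨C, hC, hbound⟩ := stmt18_dispersive_tree_general
    (isDispersivePhase_rpow hQ (half_pos hα0).ne') hQ htree hdeg hΔ hsa hq hqt hq'
  refine ⟨C, hC, fun t f _ => ?_⟩
  have hcfc := cfc_exp_cpow_neg_laplacian hQ htree hdeg hΔ hsa t (α / 2)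
  push_cast at hcfc
  rw [hcfc]
  exact hbound t f
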